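/- arXiv:0709.3986 — 10 statements merged into one kernel-verified Lean document; each statement's English description precedes it below -/
import Mathlib

section
/- Let φ : ℝ → ℝ be infinitely differentiable. Suppose that for every s₀ ∈ ℝ there exist an even natural number i₀, a real δ > 0 and a real C ≥ 0 such that every smooth 1-periodic function u : ℝ → ℝ with ‖u‖_{i₀} < δ satisfies sup_{s ∈ ℝ} |iteratedDeriv (i₀+1) (fun s => deriv φ (s₀ + u s)) s| ≤ C. Then there exist α, β ∈ ℝ such that φ t = α·t + β for all t ∈ ℝ. -/
/-!
In `D^(n+1) (F ∘ u)` the derivative of order `n + 1` of `u` occurs only in the term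
`u^(n+1) • (F' ∘ u)`; all other terms are controlled by the derivatives of `u` of order at most `n`.
If `f` is periodic, the functions `s ↦ c f (k s) / k^n`, `k → ∞`, have bounded derivatives up to
order `n`, whereas their derivative of order `n + 1` at `0` is `c k f^(n+1)(0)`, which is unbounded
as soon as `f^(n+1)(0) ≠ 0`. So a bound on `D^(n+1) (F ∘ u)` over a `C^n`-neighbourhood of `u = 0`
forces `F'(0) = 0`. Applied to `F = φ' (s₀ + ·)` for every `s₀`, this gives `φ'' = 0`.
-/

open scoped ContDiff

section Composition

variable {𝕜 E : Type*} [NontriviallyNormedField 𝕜] [NormedAddCommGroup E] [NormedSpace 𝕜 E]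

theorem exists_norm_iteratedDeriv_comp_le {F : 𝕜 → E} {n : ℕ} (hF : ContDiff 𝕜 n F) (y : 𝕜)
    (R : ℝ) : ∃ B : ℝ, ∀ (u : 𝕜 → 𝕜) (x : 𝕜), ContDiff 𝕜 n u → u x = y →
      (∀ l ≤ n, ‖iteratedDeriv l u x‖ ≤ R) → ‖iteratedDeriv n (F ∘ u) x‖ ≤ B := by
  refine ⟨n.factorial * (∑ i ∈ Finset.range (n + 1), ‖iteratedDeriv i F y‖) * max R 1 ^ n,
    fun u x hu hux hR => ?_⟩
  rw [← norm_iteratedFDeriv_eq_norm_iteratedDeriv]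
  refine norm_iteratedFDeriv_comp_le hF hu le_rfl x (fun i hi => ?_) (fun i hi hin => ?_)
  · rw [norm_iteratedFDeriv_eq_norm_iteratedDeriv, hux]
    exact Finset.single_le_sum (f := fun i => ‖iteratedDeriv i F y‖)
      (fun _ _ => norm_nonneg _) (Finset.mem_range_succ_iff.2 hi)
  · rw [norm_iteratedFDeriv_eq_norm_iteratedDeriv]
    calc ‖iteratedDeriv i u x‖ ≤ max R 1 := (hR i hin).trans (le_max_left R 1)
      _ ≤ max R 1 ^ i := le_self_pow₀ (le_max_right R 1) (by lia)

theorem iteratedDeriv_succ_comp_eq_sum {F : 𝕜 → E} {u : 𝕜 → 𝕜} {n : ℕ}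
    (hF : ContDiff 𝕜 (n + 1) F) (hu : ContDiff 𝕜 (n + 1) u) (x : 𝕜) :
    iteratedDeriv (n + 1) (F ∘ u) x = ∑ i ∈ Finset.range (n + 1),
      n.choose i • iteratedDeriv (i + 1) u x • iteratedDeriv (n - i) (deriv F ∘ u) x := by
  have hF' : ContDiff 𝕜 n (deriv F) := (contDiff_succ_iff_deriv.1 hF).2.2
  have hu' : ContDiff 𝕜 n (deriv u) := (contDiff_succ_iff_deriv.1 hu).2.2
  have chain_rule : deriv (F ∘ u) = deriv u • (deriv F ∘ u) := funext fun s =>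
    deriv.scomp s (hF.differentiable (by simp) _) (hu.differentiable (by simp) _)
  have leibniz := iteratedDerivWithin_smul (Set.mem_univ x) uniqueDiffOn_univ
    hu'.contDiffAt.contDiffWithinAt
    (hF'.comp (hu.of_le (by norm_cast; lia))).contDiffAt.contDiffWithinAt
  simpa only [iteratedDerivWithin_univ, ← chain_rule, ← iteratedDeriv_succ'] using leibniz

theorem exists_norm_iteratedDeriv_succ_comp_sub_le {F : 𝕜 → E} {n : ℕ}
    (hF : ContDiff 𝕜 (n + 1) F) (y : 𝕜) (R : ℝ) :
    ∃ B : ℝ, ∀ (u : 𝕜 → 𝕜) (x : 𝕜), ContDiff 𝕜 (n + 1) u → u x = y →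
      (∀ l ≤ n, ‖iteratedDeriv l u x‖ ≤ R) →
      ‖iteratedDeriv (n + 1) (F ∘ u) x - iteratedDeriv (n + 1) u x • deriv F y‖ ≤ B := by
  have hF' : ContDiff 𝕜 n (deriv F) := (contDiff_succ_iff_deriv.1 hF).2.2
  have lower_order (m : ℕ) (hm : m ≤ n) := exists_norm_iteratedDeriv_comp_le
    (hF'.of_le (m := m) (by exact_mod_cast hm)) y R
  choose! B hB using lower_order
  refine ⟨∑ i ∈ Finset.range n, n.choose i * (R * B (n - i)), fun u x hu hux hR => ?_⟩
  rw [iteratedDeriv_succ_comp_eq_sum hF hu, Finset.sum_range_succ, Nat.choose_self, one_smul,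
    Nat.sub_self, iteratedDeriv_zero, Function.comp_apply, hux, add_sub_cancel_right]
  refine norm_sum_le_of_le _ fun i hi => ?_
  have hin : i < n := Finset.mem_range.1 hi
  have u_le : ‖iteratedDeriv (i + 1) u x‖ ≤ R := hR (i + 1) hin
  have comp_le : ‖iteratedDeriv (n - i) (deriv F ∘ u) x‖ ≤ B (n - i) :=
    hB (n - i) (n.sub_le i) u x (hu.of_le (by norm_cast; lia)) hux fun l hl => hR l (by lia)
  have R_nonneg : 0 ≤ R := (norm_nonneg _).trans u_le
  calc _ ≤ n.choose i *
          (‖iteratedDeriv (i + 1) u x‖ * ‖iteratedDeriv (n - i) (deriv F ∘ u) x‖) := by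
        rw [← norm_smul]
        exact norm_nsmul_le
    _ ≤ n.choose i * (R * B (n - i)) := by gcongr

end Composition

section Periodic

theorem periodic_iteratedDeriv {𝕜 E : Type*} [NontriviallyNormedField 𝕜] [NormedAddCommGroup E]
    [NormedSpace 𝕜 E] {f : 𝕜 → E} {T : 𝕜} (hf : Function.Periodic f T) (n : ℕ) :
    Function.Periodic (iteratedDeriv n f) T := fun s => by
  rw [← congrFun (iteratedDeriv_comp_add_const n f T) s, funext hf]

variable {E : Type*} [NormedAddCommGroup E] [NormedSpace ℝ E]

theorem exists_norm_iteratedDeriv_le_of_periodic {f : ℝ → E} {T : ℝ} {n : ℕ}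
    (hf : ContDiff ℝ n f) (hT : T ≠ 0) (hper : Function.Periodic f T) :
    ∃ M > 0, ∀ l ≤ n, ∀ s, ‖iteratedDeriv l f s‖ ≤ M := by
  have bounded (l : ℕ) (hl : l ≤ n) : ∃ M, ∀ s, ‖iteratedDeriv l f s‖ ≤ M := by
    have hb := (periodic_iteratedDeriv hper l).isBounded_of_continuous hT
      (hf.continuous_iteratedDeriv l (by exact_mod_cast hl))
    obtain ⟨M, hM⟩ := hb.exists_norm_le
    exact ⟨M, fun s => hM _ (Set.mem_range_self s)⟩
  choose! M hM using bounded
  refine ⟨1 + ∑ l ∈ Finset.range (n + 1), |M l|, by positivity, fun l hl s => ?_⟩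
  have := Finset.single_le_sum (f := fun l => |M l|) (fun _ _ => abs_nonneg _)
    (Finset.mem_range_succ_iff.2 hl)
  linarith [hM l hl s, le_abs_self (M l)]

-- Sine or cosine alone would only do for one parity of `n`.
theorem iteratedDeriv_sin_add_cos_zero_ne_zero (n : ℕ) :
    iteratedDeriv n (Real.sin + Real.cos) 0 ≠ 0 := by
  rw [iteratedDeriv_add Real.contDiff_sin.contDiffAt Real.contDiff_cos.contDiffAt]
  obtain ⟨k, rfl | rfl⟩ := n.even_or_odd' <;> simp

theorem exists_periodic_iteratedDeriv_ne_zero (n : ℕ) :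
    ∃ f : ℝ → ℝ, ContDiff ℝ ∞ f ∧ Function.Periodic f 1 ∧ f 0 = 0 ∧
      iteratedDeriv (n + 1) f 0 ≠ 0 := by
  have smooth : ContDiff ℝ ∞ (Real.sin + Real.cos) := Real.contDiff_sin.add Real.contDiff_cos
  have periodic : Function.Periodic (Real.sin + Real.cos) (2 * Real.pi) :=
    Real.sin_periodic.add Real.cos_periodic
  refine ⟨fun s => -1 + (Real.sin + Real.cos) (2 * Real.pi * s), by fun_prop, fun s => ?_,
    by simp, ?_⟩
  · simp only [mul_add, mul_one, periodic (2 * Real.pi * s)]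
  · rw [iteratedDeriv_const_add n.succ_pos, iteratedDeriv_comp_const_mul
      (smooth.of_le (by exact_mod_cast le_top))]
    simp only [mul_zero]
    exact mul_ne_zero (by positivity) (iteratedDeriv_sin_add_cos_zero_ne_zero (n + 1))

theorem exists_periodic_iteratedDeriv_le_and_iteratedDeriv_succ_ge (n : ℕ) {ε : ℝ} (hε : 0 < ε)
    (K : ℝ) :
    ∃ u : ℝ → ℝ, ContDiff ℝ ∞ u ∧ Function.Periodic u 1 ∧ u 0 = 0 ∧
      (∀ l ≤ n, ∀ s, |iteratedDeriv l u s| ≤ ε) ∧ K ≤ |iteratedDeriv (n + 1) u 0| := by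
  obtain ⟨f, hf, hper, hf0, hne⟩ := exists_periodic_iteratedDeriv_ne_zero n
  obtain ⟨M, hM, hfM⟩ := exists_norm_iteratedDeriv_le_of_periodic (n := n)
    (hf.of_le (by exact_mod_cast le_top)) one_ne_zero hper
  have slope_pos : 0 < ε / M * |iteratedDeriv (n + 1) f 0| := by positivity
  obtain ⟨k, hk⟩ := exists_nat_ge (max 1 (K / (ε / M * |iteratedDeriv (n + 1) f 0|)))
  have hk1 : (1 : ℝ) ≤ k := (le_max_left _ _).trans hk
  have : (0 : ℝ) < k := by linarith
  have deriv_scaled (l : ℕ) (s : ℝ) :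
      |iteratedDeriv l (fun s => ε / M / k ^ n * f (k * s)) s| =
        ε / M / k ^ n * (k ^ l * |iteratedDeriv l f (k * s)|) := by
    rw [iteratedDeriv_const_mul_field, iteratedDeriv_comp_const_mul
      (hf.of_le (by exact_mod_cast le_top)), abs_mul, abs_mul, abs_of_pos (by positivity),
      abs_of_pos (by positivity)]
  refine ⟨fun s => ε / M / k ^ n * f (k * s), by fun_prop, fun s => ?_, by simp [hf0], ?_, ?_⟩
  · have : f (k * s + k * 1) = f (k * s) := hper.nat_mul k (k * s)
    simp only [mul_add, this]
  · intro l hl s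
    rw [deriv_scaled]
    calc ε / M / k ^ n * (k ^ l * |iteratedDeriv l f (k * s)|)
        ≤ ε / M / k ^ n * (k ^ n * M) := by
          gcongr
          exact hfM l hl _
      _ = ε := by field_simp
  · rw [deriv_scaled, mul_zero]
    calc K ≤ k * (ε / M * |iteratedDeriv (n + 1) f 0|) :=
          (div_le_iff₀ slope_pos).1 ((le_max_right _ _).trans hk)
      _ = ε / M / k ^ n * (k ^ (n + 1) * |iteratedDeriv (n + 1) f 0|) := by
          field_simp
          ring

theorem deriv_eq_zero_of_norm_iteratedDeriv_comp_le {F : ℝ → E} {n : ℕ}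
    (hF : ContDiff ℝ (n + 1) F) {ε C : ℝ} (hε : 0 < ε)
    (hC : ∀ u : ℝ → ℝ, ContDiff ℝ ∞ u → Function.Periodic u 1 →
      (∀ l ≤ n, ∀ s, |iteratedDeriv l u s| ≤ ε) → ‖iteratedDeriv (n + 1) (F ∘ u) 0‖ ≤ C) :
    deriv F 0 = 0 := by
  obtain ⟨B, hB⟩ := exists_norm_iteratedDeriv_succ_comp_sub_le hF 0 ε
  by_contra hne
  have hpos : 0 < ‖deriv F 0‖ := norm_pos_iff.2 hne
  obtain ⟨u, hu, hper, hu0, small, large⟩ :=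
    exists_periodic_iteratedDeriv_le_and_iteratedDeriv_succ_ge n hε ((C + B + 1) / ‖deriv F 0‖)
  have comp_le := hC u hu hper small
  have sub_le := hB u 0 (hu.of_le (by exact_mod_cast le_top)) hu0 fun l hl => small l hl 0
  have top_ge : C + B + 1 ≤ ‖iteratedDeriv (n + 1) u 0 • deriv F 0‖ := by
    rw [norm_smul]
    exact (div_le_iff₀ hpos).1 large
  linarith [norm_le_norm_add_norm_sub (iteratedDeriv (n + 1) (F ∘ u) 0)
    (iteratedDeriv (n + 1) u 0 • deriv F 0)]

end Periodic

section Affine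

variable {𝕜 E : Type*} [RCLike 𝕜] [NormedAddCommGroup E] [NormedSpace 𝕜 E]

theorem eq_smul_add_of_deriv_eq {f : 𝕜 → E} (hf : Differentiable 𝕜 f) {a : E}
    (hf' : ∀ x, deriv f x = a) (x : 𝕜) : f x = x • a + f 0 := by
  have hg (x : 𝕜) : HasDerivAt (fun x => f x - x • a) 0 x := by
    simpa [hf'] using (hf x).hasDerivAt.fun_sub ((hasDerivAt_id x).smul_const a)
  have := is_const_of_deriv_eq_zero (fun x => (hg x).differentiableAt)
    (fun x => (hg x).deriv) x 0
  rwa [zero_smul, sub_zero, sub_eq_iff_eq_add'] at this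

end Affine

theorem stmt0_general {E : Type*} [NormedAddCommGroup E] [NormedSpace ℝ E] (φ : ℝ → E)
    (hφ : ContDiff ℝ ∞ φ)
    (h : ∀ s₀ : ℝ, ∃ n : ℕ, ∃ δ > 0, ∃ C : ℝ,
      ∀ u : ℝ → ℝ, ContDiff ℝ ∞ u → Function.Periodic u 1 →
        (∃ r < δ, ∀ l ≤ n, ∀ s, |iteratedDeriv l u s| ≤ r) →
        ∀ s, ‖iteratedDeriv (n + 1) (fun s => deriv φ (s₀ + u s)) s‖ ≤ C) :
    ∃ a b : E, ∀ t, φ t = t • a + b := by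
  have hφ' : ContDiff ℝ ∞ (deriv φ) := (contDiff_infty_iff_deriv.1 hφ).2
  have second_deriv_eq_zero (s₀ : ℝ) : deriv (deriv φ) s₀ = 0 := by
    obtain ⟨n, δ, hδ, C, hC⟩ := h s₀
    have smooth : ContDiff ℝ ∞ fun t => deriv φ (s₀ + t) := by fun_prop
    have : deriv (fun t => deriv φ (s₀ + t)) 0 = 0 :=
      deriv_eq_zero_of_norm_iteratedDeriv_comp_le
        (smooth.of_le (by exact_mod_cast le_top)) (half_pos hδ)
        fun u hu hper small => hC u hu hper ⟨δ / 2, half_lt_self hδ, small⟩ 0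
    rwa [deriv_comp_const_add, add_zero] at this
  have deriv_const (t : ℝ) : deriv φ t = deriv φ 0 :=
    is_const_of_deriv_eq_zero (hφ'.differentiable (by simp)) second_deriv_eq_zero t 0
  exact ⟨deriv φ 0, φ 0, eq_smul_add_of_deriv_eq (hφ.differentiable (by simp)) deriv_const⟩

/-- Calibration-free quantitative form of Theorem 11: if for every `s₀` there are an even
`i₀`, `δ > 0` and `C ≥ 0` such that every smooth 1-periodic `u` with `‖u‖_{i₀} < δ`
satisfies `sup_s |D^{i₀+1} (φ' ∘ (s₀ + u))| ≤ C`, then `φ` is affine. -/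
theorem stmt0 (φ : ℝ → ℝ) (hφ : ContDiff ℝ (⊤ : ℕ∞) φ)
    (h : ∀ s₀ : ℝ, ∃ i₀ : ℕ, Even i₀ ∧ ∃ δ : ℝ, 0 < δ ∧ ∃ C : ℝ, 0 ≤ C ∧
      ∀ u : ℝ → ℝ, ContDiff ℝ (⊤ : ℕ∞) u → (∀ s : ℝ, u (s + 1) = u s) →
        (∃ r : ℝ, r < δ ∧ ∀ l : ℕ, l ≤ i₀ → ∀ s : ℝ, |iteratedDeriv l u s| ≤ r) →
        ∀ s : ℝ, |iteratedDeriv (i₀ + 1) (fun s => deriv φ (s₀ + u s)) s| ≤ C) :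
    ∃ α β : ℝ, ∀ t : ℝ, φ t = α * t + β := by
  obtain ⟨α, β, hαβ⟩ := stmt0_general φ hφ fun s₀ =>
    let ⟨i₀, _, δ, hδ, C, _, hC⟩ := h s₀
    ⟨i₀, δ, hδ, C, hC⟩
  exact ⟨α, β, fun t => by rw [hαβ, smul_eq_mul, mul_comm]⟩
end

section
/- Let φ : ℝ → ℝ be infinitely differentiable and let s₀ ∈ ℝ. Suppose there exist an even natural number i₀, a real δ > 0 and a real C ≥ 0 such that every smooth 1-periodic function u : ℝ → ℝ with ‖u‖_{i₀} < δ satisfies sup_{s ∈ ℝ} |iteratedDeriv (i₀+1) (fun s => deriv φ (s₀ + u s)) s| ≤ C. Then deriv (deriv φ) s₀ = 0. -/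
/-!
By Faà di Bruno's formula, the derivative of order `n + 1` of `g ∘ f` at `x` is
`iteratedDeriv (n + 1) f x • deriv g (f x)` plus terms that only involve the derivatives of `f` of
order at most `n`. A periodic function of very high frequency can have a prescribed, arbitrarily
large derivative of order `n + 1` at `0` while all its derivatives of order at most `n` are tiny,
so a uniform bound on the derivative of order `n + 1` of `g ∘ (s₀ + u)` over all such `u` leaves
no room for a nonzero `deriv g s₀`.
-/

open scoped ContDiff Real

section FaaDiBruno

theorem sum_partSize {n : ℕ} (c : OrderedFinpartition n) : ∑ j, c.partSize j = n := by
  simpa using Fintype.card_congr c.equivSigma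

theorem partSize_lt_of_length_ne_one {n : ℕ} {c : OrderedFinpartition n} (hc : c.length ≠ 1)
    (j : Fin c.length) : c.partSize j < n := by
  have : Nontrivial (Fin c.length) := Fin.nontrivial_iff_two_le.2 (by have := j.pos; omega)
  obtain ⟨k, hk⟩ := exists_ne j
  calc c.partSize j < ∑ i, c.partSize i :=
        Finset.single_lt_sum hk (Finset.mem_univ j) (Finset.mem_univ k) (c.partSize_pos k)
          fun i _ _ => Nat.zero_le _
    _ = n := sum_partSize c

variable {𝕜 E : Type*} [NontriviallyNormedField 𝕜] [NormedAddCommGroup E] [NormedSpace 𝕜 E]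
  {n : ℕ}

theorem norm_iteratedDeriv_comp_le_of_deriv_eq_zero {g : 𝕜 → E} {f : 𝕜 → 𝕜} {x : 𝕜}
    (hg : ContDiffAt 𝕜 n g (f x)) (hf : ContDiffAt 𝕜 n f x) (hg' : deriv g (f x) = 0)
    (hb : ∀ i, 0 < i → i < n → ‖iteratedDeriv i f x‖ ≤ 1) :
    ‖iteratedDeriv n (g ∘ f) x‖ ≤
      ∑ c : OrderedFinpartition n, ‖iteratedDeriv c.length g (f x)‖ := by
  rw [iteratedDeriv_scomp_eq_sum_orderedFinpartition hg hf le_rfl]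
  refine norm_sum_le_of_le _ fun c _ => ?_
  rcases eq_or_ne c.length 1 with hc | hc
  · have hzero : iteratedDeriv c.length g (f x) = 0 := by rw [hc, iteratedDeriv_one, hg']
    simp only [hzero, smul_zero, norm_zero, le_refl]
  · rw [norm_smul, norm_prod]
    exact mul_le_of_le_one_left (norm_nonneg _) <| Finset.prod_le_one
      (fun _ _ => norm_nonneg _)
      fun j _ => hb _ (c.partSize_pos j) (partSize_lt_of_length_ne_one hc j)

theorem exists_norm_iteratedDeriv_comp_sub_smul_deriv_le (hn : n ≠ 0) {g : 𝕜 → E} {y : 𝕜}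
    (hg : ContDiffAt 𝕜 n g y) :
    ∃ M : ℝ, ∀ (f : 𝕜 → 𝕜) (x : 𝕜), ContDiffAt 𝕜 n f x → f x = y →
      (∀ i, 0 < i → i < n → ‖iteratedDeriv i f x‖ ≤ 1) →
      ‖iteratedDeriv n (g ∘ f) x - iteratedDeriv n f x • deriv g y‖ ≤ M := by
  -- Subtracting its linear part from `g` removes exactly the top-order term of Faà di Bruno's sum.
  set h : 𝕜 → E := fun z => g z - z • deriv g y
  have hlin : ContDiff 𝕜 n fun z : 𝕜 => z • deriv g y := contDiff_id.smul contDiff_const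
  have hh : ContDiffAt 𝕜 n h y := hg.sub hlin.contDiffAt
  have hh' : deriv h y = 0 := by
    have hgy : HasDerivAt g (deriv g y) y :=
      (hg.differentiableAt (by exact_mod_cast hn)).hasDerivAt
    exact (hgy.sub ((hasDerivAt_id y).smul_const (deriv g y))).deriv.trans (by simp)
  refine ⟨∑ c : OrderedFinpartition n, ‖iteratedDeriv c.length h y‖, fun f x hf hfx hb => ?_⟩
  subst hfx
  have hsplit : iteratedDeriv n (h ∘ f) x =
      iteratedDeriv n (g ∘ f) x - iteratedDeriv n f x • deriv g (f x) := by
    rw [← iteratedDeriv_smul_const hf]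
    exact iteratedDeriv_sub (hg.comp x hf) (hf.smul contDiffAt_const)
  rw [← hsplit]
  exact norm_iteratedDeriv_comp_le_of_deriv_eq_zero hh hf hh' hb

end FaaDiBruno

section Wave

theorem iteratedDeriv_cos_eq_cos_add (n : ℕ) (x : ℝ) :
    iteratedDeriv n Real.cos x = Real.cos (x + n * (π / 2)) := by
  induction n generalizing x with
  | zero => simp
  | succ n ih =>
    rw [iteratedDeriv_succ, funext ih, deriv_comp_add_const, Real.deriv_cos,
      ← Real.cos_add_pi_div_two]
    push_cast
    ring_nf

/-- The wave of angular frequency `ξ` whose `n`-th derivative is `s ↦ A cos (ξ s)`; it has large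
`n`-th derivative and small lower derivatives when `ξ` is large compared with `A`. -/
noncomputable def wave (n : ℕ) (A ξ s : ℝ) : ℝ :=
  A / ξ ^ n * Real.cos (ξ * s - n * (π / 2))

variable {n : ℕ} {A ξ : ℝ}

theorem contDiff_wave {m : ℕ∞ω} : ContDiff ℝ m (wave n A ξ) := by
  unfold wave
  fun_prop

theorem wave_periodic (k : ℕ) : Function.Periodic (wave n A (k * (2 * π))) 1 := fun s => by
  unfold wave
  rw [mul_add, mul_one, add_sub_right_comm, Real.cos_add_nat_mul_two_pi]

theorem iteratedDeriv_wave (l : ℕ) (s : ℝ) :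
    iteratedDeriv l (wave n A ξ) s =
      A / ξ ^ n * (ξ ^ l * Real.cos (ξ * s - n * (π / 2) + l * (π / 2))) := by
  have hcos : ContDiff ℝ l fun x => Real.cos (x - n * (π / 2)) := by fun_prop
  unfold wave
  rw [iteratedDeriv_const_mul_field, iteratedDeriv_comp_const_mul hcos,
    iteratedDeriv_comp_sub_const]
  beta_reduce
  rw [iteratedDeriv_cos_eq_cos_add]

theorem iteratedDeriv_wave_zero (hξ : ξ ≠ 0) : iteratedDeriv n (wave n A ξ) 0 = A := by
  rw [iteratedDeriv_wave, mul_zero, sub_add_cancel, Real.cos_zero, mul_one,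
    div_mul_cancel₀ _ (pow_ne_zero n hξ)]

theorem abs_iteratedDeriv_wave_le {l : ℕ} (hξ : 1 ≤ ξ) (hl : l < n) (s : ℝ) :
    |iteratedDeriv l (wave n A ξ) s| ≤ |A| / ξ := by
  have hξ₀ : 0 < ξ := one_pos.trans_le hξ
  rw [iteratedDeriv_wave, abs_mul, abs_mul, abs_div, abs_of_pos (pow_pos hξ₀ n),
    abs_of_pos (pow_pos hξ₀ l)]
  calc |A| / ξ ^ n * (ξ ^ l * |Real.cos (ξ * s - n * (π / 2) + l * (π / 2))|)
      ≤ |A| / ξ ^ n * (ξ ^ l * 1) := by gcongr; exact Real.abs_cos_le_one _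
    _ = |A| * ξ ^ (l + 1) / ξ ^ n / ξ := by rw [pow_succ]; field_simp
    _ ≤ |A| * ξ ^ n / ξ ^ n / ξ := by gcongr; exact hl
    _ = |A| / ξ := by field_simp

theorem exists_periodic_small_iteratedDeriv_eq (n : ℕ) {ε : ℝ} (hε : 0 < ε) (A : ℝ) :
    ∃ u : ℝ → ℝ, ContDiff ℝ ∞ u ∧ Function.Periodic u 1 ∧ u 0 = 0 ∧
      (∀ l ≤ n, ∀ s, |iteratedDeriv l u s| ≤ ε) ∧ iteratedDeriv (n + 1) u 0 = A := by
  obtain ⟨k, hk⟩ := exists_nat_ge (max 1 (2 * |A| / ε))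
  set ξ : ℝ := k * (2 * π)
  have hkξ : (k : ℝ) ≤ ξ :=
    le_mul_of_one_le_right k.cast_nonneg (by linarith [Real.pi_gt_three])
  have hξ : 1 ≤ ξ := (le_max_left _ _).trans (hk.trans hkξ)
  have hAξ : |A| / ξ ≤ ε / 2 := by
    have hAk : 2 * |A| / ε ≤ ξ := (le_max_right _ _).trans (hk.trans hkξ)
    rw [div_le_iff₀ hε] at hAk
    rw [div_le_iff₀ (one_pos.trans_le hξ)]
    linarith
  set v : ℝ → ℝ := wave (n + 1) A ξ
  have hv (l : ℕ) (hl : l ≤ n) (s : ℝ) : |iteratedDeriv l v s| ≤ ε / 2 :=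
    (abs_iteratedDeriv_wave_le hξ (Nat.lt_succ_of_le hl) s).trans hAξ
  refine ⟨fun s => -v 0 + v s, contDiff_const.add contDiff_wave,
    fun s => congrArg (-v 0 + ·) (wave_periodic k s), neg_add_cancel _, fun l hl s => ?_, ?_⟩
  · rcases l.eq_zero_or_pos with rfl | hl₀
    · have hv₀ := hv 0 hl
      simp only [iteratedDeriv_zero] at hv₀ ⊢
      calc |-v 0 + v s| ≤ |-v 0| + |v s| := abs_add_le _ _
        _ ≤ ε / 2 + ε / 2 := add_le_add ((abs_neg _).trans_le (hv₀ 0)) (hv₀ s)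
        _ = ε := add_halves ε
    · rw [iteratedDeriv_const_add hl₀]
      exact (hv l hl s).trans (half_le_self hε.le)
  · rw [iteratedDeriv_const_add n.succ_pos]
    exact iteratedDeriv_wave_zero (one_pos.trans_le hξ).ne'

end Wave

theorem stmt1_general {E : Type*} [NormedAddCommGroup E] [NormedSpace ℝ E] {g : ℝ → E} {s₀ : ℝ}
    {n : ℕ} (hg : ContDiffAt ℝ (n + 1) g s₀) {δ : ℝ} (hδ : 0 < δ) {C : ℝ}
    (h : ∀ u : ℝ → ℝ, ContDiff ℝ ∞ u → (∀ s, u (s + 1) = u s) →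
      (∃ r < δ, ∀ l ≤ n, ∀ s, |iteratedDeriv l u s| ≤ r) →
      ‖iteratedDeriv (n + 1) (fun s => g (s₀ + u s)) 0‖ ≤ C) :
    deriv g s₀ = 0 := by
  obtain ⟨M, hM⟩ := exists_norm_iteratedDeriv_comp_sub_smul_deriv_le n.succ_ne_zero
    (by exact_mod_cast hg)
  have hbound (A : ℝ) : |A| * ‖deriv g s₀‖ ≤ C + M := by
    obtain ⟨r, hr, hrδ⟩ := exists_between (lt_min one_pos hδ)
    obtain ⟨u, hu, hper, hu₀, hsmall, hA⟩ := exists_periodic_small_iteratedDeriv_eq n hr A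
    have hcomp := h u hu hper ⟨r, hrδ.trans_le (min_le_right _ _), hsmall⟩
    have hrem := hM (fun s => s₀ + u s) 0
      (contDiff_const.add (hu.of_le (by exact_mod_cast le_top))).contDiffAt (by simp [hu₀])
      fun i hi hin => by
        rw [iteratedDeriv_const_add hi]
        exact (hsmall i (Nat.le_of_lt_succ hin) 0).trans (hrδ.le.trans (min_le_left _ _))
    rw [iteratedDeriv_const_add n.succ_pos, hA] at hrem
    calc |A| * ‖deriv g s₀‖ = ‖A • deriv g s₀‖ := (norm_smul A _).symm
      _ ≤ C + M := (norm_le_norm_add_norm_sub _ _).trans (add_le_add hcomp hrem)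
  by_contra hne
  have hpos : 0 < ‖deriv g s₀‖ := norm_pos_iff.2 hne
  have hlarge := (mul_le_mul_of_nonneg_right (le_abs_self _) hpos.le).trans
    (hbound ((C + M + 1) / ‖deriv g s₀‖))
  rw [div_mul_cancel₀ _ hpos.ne'] at hlarge
  linarith

/-- Pointwise step in the proof of Theorem 11: a uniform bound `C` on the `(i₀+1)`-st
derivative of `φ' ∘ (s₀ + u)` over all smooth 1-periodic `u` with `‖u‖_{i₀} < δ`
(for some even `i₀`) forces `φ'' s₀ = 0`. -/
theorem stmt1 (φ : ℝ → ℝ) (hφ : ContDiff ℝ (⊤ : ℕ∞) φ) (s₀ : ℝ)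
    (h : ∃ i₀ : ℕ, Even i₀ ∧ ∃ δ : ℝ, 0 < δ ∧ ∃ C : ℝ, 0 ≤ C ∧
      ∀ u : ℝ → ℝ, ContDiff ℝ (⊤ : ℕ∞) u → (∀ s : ℝ, u (s + 1) = u s) →
        (∃ r : ℝ, r < δ ∧ ∀ l : ℕ, l ≤ i₀ → ∀ s : ℝ, |iteratedDeriv l u s| ≤ r) →
        ∀ s : ℝ, |iteratedDeriv (i₀ + 1) (fun s => deriv φ (s₀ + u s)) s| ≤ C) :
    deriv (deriv φ) s₀ = 0 := by
  obtain ⟨i₀, -, δ, hδ, C, -, h⟩ := h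
  have hφ' : ContDiff ℝ ∞ (deriv φ) := (contDiff_infty_iff_deriv.1 hφ).2
  exact stmt1_general (hφ'.of_le (by exact_mod_cast le_top)).contDiffAt hδ
    fun u hu hper hsmall => h u hu hper hsmall 0
end

section
/- Let φ : ℝ → ℝ be infinitely differentiable and let x, u : ℝ → ℝ be smooth 1-periodic functions. Then for every k ∈ ℕ and every ε > 0 there exists δ > 0 such that for every real t with 0 < |t| < δ, every l ≤ k and every s ∈ ℝ one has |iteratedDeriv l (fun s => (φ (x s + t·u s) − φ (x s))/t − deriv φ (x s) · u s) s| < ε. (Thus the Gateaux derivative of the map x ↦ φ∘x on the Fréchet space of smooth 1-periodic functions at x in direction u is (φ'∘x)·u, with convergence of the difference quotients in every C^k sup-seminorm.) -/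
/-!
The difference quotient of `φ ∘ x` in direction `u` is the difference quotient in `t` of the
function `F (s, t) = φ (x s + t • u s)` of two variables. Both translations and (by symmetry of
second derivatives) `∂ₜ` commute with the iterated derivatives, so the `l`-th derivative of the
remainder of a difference quotient of `F` is the remainder of the corresponding difference quotient
of the `l`-th derivative of `F`. The latter is still `C¹`, so strict differentiability makes this
remainder small locally uniformly, and periodicity in `s` provides compactness.
-/

open Filter Topology

section SlopeRemainder

variable {𝕜 E F : Type*} [RCLike 𝕜] [NormedAddCommGroup E] [NormedSpace 𝕜 E]
  [NormedAddCommGroup F] [NormedSpace 𝕜 F] {f : E → F} {l : ℕ}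

/-- The remainder of the difference quotient of `f` in direction `w`: the quotient with step `t` at
the point `p` minus the directional derivative of `f` at `p`. The step `t = 0` is a junk value. -/
noncomputable def slopeRemainder (f : E → F) (w : E) (t : 𝕜) (p : E) : F :=
  t⁻¹ • (f (p + t • w) - f p) - fderiv 𝕜 f p w

theorem tendstoLocallyUniformly_slopeRemainder (hf : ContDiff 𝕜 1 f) (w : E) :
    TendstoLocallyUniformly (slopeRemainder (𝕜 := 𝕜) f w) 0 (𝓝[≠] 0) := by
  refine tendstoLocallyUniformly_iff_filter.mpr fun p ↦ tendsto_prod_filter_iff.mp ?_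
  have hstep : Tendsto (fun z : 𝕜 × E ↦ (z.2 + z.1 • w, z.2)) (𝓝[≠] 0 ×ˢ 𝓝 p) (𝓝 (p, p)) := by
    have hcont : ContinuousAt (fun z : 𝕜 × E ↦ (z.2 + z.1 • w, z.2)) (0, p) := by fun_prop
    rw [ContinuousAt, nhds_prod_eq, zero_smul, add_zero] at hcont
    exact hcont.mono_left (prod_mono_left _ nhdsWithin_le_nhds)
  have hstrict : (fun z : 𝕜 × E ↦ f (z.2 + z.1 • w) - f z.2 - fderiv 𝕜 f p (z.1 • w))
      =o[𝓝[≠] 0 ×ˢ 𝓝 p] fun z ↦ z.1 := by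
    have hsmul : (fun z : 𝕜 × E ↦ z.1 • w) =O[𝓝[≠] 0 ×ˢ 𝓝 p] fun z ↦ z.1 :=
      .of_bound ‖w‖ (.of_forall fun z ↦ by rw [norm_smul, mul_comm])
    have hcomp := (hf.hasStrictFDerivAt (x := p) one_ne_zero).isLittleO.comp_tendsto hstep
    simp only [Function.comp_def, add_sub_cancel_left] at hcomp
    exact hcomp.trans_isBigO hsmul
  have hfderiv : Tendsto (fun z : 𝕜 × E ↦ fderiv 𝕜 f p w - fderiv 𝕜 f z.2 w) (𝓝[≠] 0 ×ˢ 𝓝 p)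
      (𝓝 0) := by
    have hcont : Continuous fun q ↦ fderiv 𝕜 f p w - fderiv 𝕜 f q w :=
      continuous_const.sub ((hf.continuous_fderiv one_ne_zero).clm_apply continuous_const)
    simpa [Function.comp_def] using (hcont.tendsto p).comp tendsto_snd
  have hsum := hstrict.tendsto_inv_smul_nhds_zero.add hfderiv
  rw [add_zero] at hsum
  refine hsum.congr' ?_
  filter_upwards [tendsto_fst.eventually self_mem_nhdsWithin] with z hz
  rw [map_smul, smul_sub, inv_smul_smul₀ hz, sub_add_sub_cancel]
  rfl

theorem contDiff_slopeRemainder (hf : ContDiff 𝕜 (l + 1) f) (w : E) (t : 𝕜) :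
    ContDiff 𝕜 l (slopeRemainder f w t) := by
  have hf' : ContDiff 𝕜 l f := hf.of_le le_self_add
  exact (((hf'.comp (contDiff_id.add contDiff_const)).sub hf').const_smul t⁻¹).sub
    ((hf.fderiv_right le_rfl).clm_apply contDiff_const)

theorem iteratedFDeriv_fderiv_apply (hf : ContDiff 𝕜 (l + 1) f) (w p : E) :
    iteratedFDeriv 𝕜 l (fun q ↦ fderiv 𝕜 f q w) p = fderiv 𝕜 (iteratedFDeriv 𝕜 l f) p w := by
  induction l generalizing p with
  | zero =>
    ext m
    have hdiff : DifferentiableAt 𝕜 (iteratedFDeriv 𝕜 0 f) p :=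
      hf.differentiable_iteratedFDeriv (by simp) p
    rw [iteratedFDeriv_zero_apply, ← fderiv_continuousMultilinear_apply_const_apply hdiff]
    simp only [iteratedFDeriv_zero_apply]
  | succ l ih =>
    ext m
    have hdiff : Differentiable 𝕜 (iteratedFDeriv 𝕜 (l + 1) f) :=
      hf.differentiable_iteratedFDeriv (by norm_cast; lia)
    have hC2 : ContDiff 𝕜 2 (iteratedFDeriv 𝕜 l f) := hf.iteratedFDeriv_right (by norm_cast; lia)
    have hdiff' : Differentiable 𝕜 (fderiv 𝕜 (iteratedFDeriv 𝕜 l f)) :=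
      (hC2.fderiv_right (m := 1) (by norm_num)).differentiable one_ne_zero
    have hsymm : IsSymmSndFDerivAt 𝕜 (iteratedFDeriv 𝕜 l f) p :=
      hC2.contDiffAt.isSymmSndFDerivAt (by simp)
    have hright : fderiv 𝕜 (iteratedFDeriv 𝕜 (l + 1) f) p w m =
        fderiv 𝕜 (fderiv 𝕜 (iteratedFDeriv 𝕜 l f)) p w (m 0) (Fin.tail m) := by
      rw [← fderiv_continuousMultilinear_apply_const_apply (hdiff p)]
      simp only [iteratedFDeriv_succ_apply_left]
      rw [fderiv_continuousMultilinear_apply_const_apply (by fun_prop)]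
      simp [fderiv_clm_apply, hdiff' p]
    rw [iteratedFDeriv_succ_apply_left, funext (ih (hf.of_le (by norm_cast; lia))), hright,
      ← hsymm.eq]
    simp [fderiv_clm_apply, hdiff' p]

theorem iteratedFDeriv_slopeRemainder (hf : ContDiff 𝕜 (l + 1) f) (w : E) (t : 𝕜) :
    iteratedFDeriv 𝕜 l (slopeRemainder f w t) = slopeRemainder (iteratedFDeriv 𝕜 l f) w t := by
  have hf' : ContDiff 𝕜 l f := hf.of_le le_self_add
  have htrans : ContDiff 𝕜 l fun p ↦ f (p + t • w) := hf'.comp (contDiff_id.add contDiff_const)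
  have hfderiv : ContDiff 𝕜 l fun p ↦ fderiv 𝕜 f p w :=
    (hf.fderiv_right le_rfl).clm_apply contDiff_const
  funext p
  unfold slopeRemainder
  rw [fun_iteratedFDeriv_sub_apply ((htrans.sub hf').const_smul _).contDiffAt hfderiv.contDiffAt,
    iteratedFDeriv_const_smul_apply' (htrans.sub hf').contDiffAt,
    fun_iteratedFDeriv_sub_apply htrans.contDiffAt hf'.contDiffAt,
    iteratedFDeriv_comp_add_right, iteratedFDeriv_fderiv_apply hf]

theorem tendstoLocallyUniformly_iteratedFDeriv_slopeRemainder (hf : ContDiff 𝕜 (l + 1) f)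
    (w : E) :
    TendstoLocallyUniformly (fun t : 𝕜 ↦ iteratedFDeriv 𝕜 l (slopeRemainder f w t)) 0
      (𝓝[≠] 0) := by
  simp only [iteratedFDeriv_slopeRemainder hf w]
  exact tendstoLocallyUniformly_slopeRemainder (hf.iteratedFDeriv_right (add_comm _ _).le) w

end SlopeRemainder

section Composition

variable {𝕜 M E F : Type*} [RCLike 𝕜] [NormedAddCommGroup M] [NormedSpace 𝕜 M]
  [NormedAddCommGroup E] [NormedSpace 𝕜 E] [NormedAddCommGroup F] [NormedSpace 𝕜 F]
  {φ : E → F} {x u : M → E} {l : ℕ}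

/-- The remainder of the difference quotient at `x`, in direction `u`, of the superposition operator
`x ↦ φ ∘ x`, whose Gateaux derivative is `s ↦ fderiv 𝕜 φ (x s) (u s)`. -/
noncomputable def compSlopeRemainder (φ : E → F) (x u : M → E) (t : 𝕜) (s : M) : F :=
  t⁻¹ • (φ (x s + t • u s) - φ (x s)) - fderiv 𝕜 φ (x s) (u s)

theorem compSlopeRemainder_eq_slopeRemainder (hφ : Differentiable 𝕜 φ) (hx : Differentiable 𝕜 x)
    (hu : Differentiable 𝕜 u) (t : 𝕜) :
    compSlopeRemainder φ x u t =
      slopeRemainder (fun p : M × 𝕜 ↦ φ (x p.1 + p.2 • u p.1)) (0, 1) t ∘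
        ContinuousLinearMap.inl 𝕜 M 𝕜 := by
  funext s
  have hF : Differentiable 𝕜 fun p : M × 𝕜 ↦ φ (x p.1 + p.2 • u p.1) := by fun_prop
  have hdir : fderiv 𝕜 (fun p : M × 𝕜 ↦ φ (x p.1 + p.2 • u p.1)) (s, 0) (0, 1) =
      fderiv 𝕜 φ (x s) (u s) := by
    rw [← (hF _).lineDeriv_eq_fderiv, ← (hφ _).lineDeriv_eq_fderiv]
    simp [lineDeriv]
  simp [compSlopeRemainder, slopeRemainder, hdir]

theorem tendstoLocallyUniformly_iteratedFDeriv_compSlopeRemainder (hφ : ContDiff 𝕜 (l + 1) φ)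
    (hx : ContDiff 𝕜 (l + 1) x) (hu : ContDiff 𝕜 (l + 1) u) :
    TendstoLocallyUniformly (fun t : 𝕜 ↦ iteratedFDeriv 𝕜 l (compSlopeRemainder φ x u t)) 0
      (𝓝[≠] 0) := by
  have hF : ContDiff 𝕜 (l + 1) fun p : M × 𝕜 ↦ φ (x p.1 + p.2 • u p.1) := by fun_prop
  let restrict : ((M × 𝕜) [×l]→L[𝕜] F) →L[𝕜] M [×l]→L[𝕜] F :=
    ContinuousMultilinearMap.compContinuousLinearMapL fun _ ↦ ContinuousLinearMap.inl 𝕜 M 𝕜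
  have hderiv (t : 𝕜) : iteratedFDeriv 𝕜 l (compSlopeRemainder φ x u t) = restrict ∘
      iteratedFDeriv 𝕜 l (slopeRemainder (fun p : M × 𝕜 ↦ φ (x p.1 + p.2 • u p.1)) (0, 1) t) ∘
        ContinuousLinearMap.inl 𝕜 M 𝕜 := by
    funext s
    rw [compSlopeRemainder_eq_slopeRemainder (hφ.differentiable (by simp))
      (hx.differentiable (by simp)) (hu.differentiable (by simp)),
      ContinuousLinearMap.iteratedFDeriv_comp_right _ (contDiff_slopeRemainder hF _ t) _ le_rfl]
    rfl
  have hzero : restrict ∘ (0 : M × 𝕜 → (M × 𝕜) [×l]→L[𝕜] F) ∘ ContinuousLinearMap.inl 𝕜 M 𝕜 = 0 :=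
    funext fun _ ↦ map_zero restrict
  simp only [hderiv]
  rw [← hzero]
  exact restrict.uniformContinuous.comp_tendstoLocallyUniformly
    ((tendstoLocallyUniformly_iteratedFDeriv_slopeRemainder hF (0, 1)).comp
      (ContinuousLinearMap.inl 𝕜 M 𝕜) (ContinuousLinearMap.inl 𝕜 M 𝕜).continuous)

end Composition

section Periodic

theorem tendstoUniformly_of_periodic {ι β : Type*} [UniformSpace β] {G : ι → ℝ → β} {g : ℝ → β}
    {p : Filter ι} {c : ℝ} (hc : 0 < c) (hG : ∀ i, Function.Periodic (G i) c)
    (hg : Function.Periodic g c) (h : TendstoLocallyUniformly G g p) :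
    TendstoUniformly G g p := by
  have hIcc : TendstoUniformlyOn G g p (Set.Icc 0 c) :=
    (tendstoLocallyUniformlyOn_iff_tendstoUniformlyOn_of_compact isCompact_Icc).mp
      h.tendstoLocallyUniformlyOn
  intro V hV
  filter_upwards [hIcc V hV] with i hi s
  have hpair : Function.Periodic (fun s ↦ (g s, G i s)) c := fun s ↦ by simp only [hg s, hG i s]
  obtain ⟨r, hr, hsr⟩ := hpair.exists_mem_Ico₀ hc s
  simpa only [← hsr] using hi r (Set.Ico_subset_Icc_self hr)

theorem periodic_iteratedDeriv_s2 {F : Type*} [NormedAddCommGroup F] [NormedSpace ℝ F] {g : ℝ → F}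
    {c : ℝ} (hg : Function.Periodic g c) (l : ℕ) : Function.Periodic (iteratedDeriv l g) c :=
  fun s ↦ by rw [← congrFun (iteratedDeriv_comp_add_const l g c) s, funext hg]

variable {E F : Type*} [NormedAddCommGroup E] [NormedSpace ℝ E]
  [NormedAddCommGroup F] [NormedSpace ℝ F] {φ : E → F} {x u : ℝ → E} {c : ℝ}

theorem tendstoUniformly_iteratedDeriv_compSlopeRemainder {l : ℕ} (hφ : ContDiff ℝ (l + 1) φ)
    (hx : ContDiff ℝ (l + 1) x) (hxper : Function.Periodic x c)
    (hu : ContDiff ℝ (l + 1) u) (huper : Function.Periodic u c) (hc : 0 < c) :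
    TendstoUniformly (fun t : ℝ ↦ iteratedDeriv l (compSlopeRemainder φ x u t)) 0 (𝓝[≠] 0) := by
  have hper (t : ℝ) : Function.Periodic (compSlopeRemainder φ x u t) c := fun s ↦ by
    simp only [compSlopeRemainder, hxper s, huper s]
  refine tendstoUniformly_of_periodic hc (fun t ↦ periodic_iteratedDeriv_s2 (hper t) l)
    (fun _ ↦ rfl) ?_
  have hlocal := tendstoLocallyUniformly_iteratedFDeriv_compSlopeRemainder (𝕜 := ℝ) hφ hx hu
  rw [Metric.tendstoLocallyUniformly_iff] at hlocal ⊢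
  simpa only [Pi.zero_apply, dist_zero_left, norm_iteratedFDeriv_eq_norm_iteratedDeriv] using hlocal

theorem stmt2_general (hc : 0 < c) {k : ℕ} (hφ : ContDiff ℝ (k + 1) φ)
    (hx : ContDiff ℝ (k + 1) x) (hxper : Function.Periodic x c)
    (hu : ContDiff ℝ (k + 1) u) (huper : Function.Periodic u c) {ε : ℝ} (hε : 0 < ε) :
    ∃ δ : ℝ, 0 < δ ∧ ∀ t : ℝ, 0 < |t| → |t| < δ → ∀ l : ℕ, l ≤ k → ∀ s : ℝ,
      ‖iteratedDeriv l (fun s ↦ t⁻¹ • (φ (x s + t • u s) - φ (x s)) - fderiv ℝ φ (x s) (u s)) s‖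
        < ε := by
  have hle (l : ℕ) (hl : l ≤ k) : (l + 1 : WithTop ℕ∞) ≤ k + 1 := by gcongr
  have hsmall : ∀ᶠ t : ℝ in 𝓝[≠] 0, ∀ l ≤ k, ∀ s,
      ‖iteratedDeriv l (compSlopeRemainder φ x u t) s‖ < ε := by
    refine (Set.finite_Iic k).eventually_all.mpr fun l hl ↦ ?_
    simpa using Metric.tendstoUniformly_iff.mp (tendstoUniformly_iteratedDeriv_compSlopeRemainder
      (hφ.of_le (hle l hl)) (hx.of_le (hle l hl)) hxper (hu.of_le (hle l hl)) huper hc) ε hε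
  obtain ⟨δ, hδ, hsub⟩ := Metric.eventually_nhds_iff.mp (eventually_nhdsWithin_iff.mp hsmall)
  exact ⟨δ, hδ, fun t ht htδ ↦ hsub (by simpa using htδ) (abs_pos.mp ht)⟩

end Periodic

/-- Lemma 8 of the paper: for smooth `φ` and smooth 1-periodic `x, u`, the difference
quotients of `x ↦ φ ∘ x` at `x` in direction `u` converge to `(φ' ∘ x) · u` in every
`C^k` sup-seminorm of the Fréchet space of smooth 1-periodic functions. -/
theorem stmt2 (φ : ℝ → ℝ) (hφ : ContDiff ℝ (⊤ : ℕ∞) φ)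
    (x u : ℝ → ℝ) (hx : ContDiff ℝ (⊤ : ℕ∞) x) (hxper : ∀ s : ℝ, x (s + 1) = x s)
    (hu : ContDiff ℝ (⊤ : ℕ∞) u) (huper : ∀ s : ℝ, u (s + 1) = u s) :
    ∀ k : ℕ, ∀ ε : ℝ, 0 < ε → ∃ δ : ℝ, 0 < δ ∧
      ∀ t : ℝ, 0 < |t| → |t| < δ → ∀ l : ℕ, l ≤ k → ∀ s : ℝ,
        |iteratedDeriv l
          (fun s => (φ (x s + t * u s) - φ (x s)) / t - deriv φ (x s) * u s) s| < ε := by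
  intro k ε hε
  have hle : ((k + 1 : ℕ) : WithTop ℕ∞) ≤ (⊤ : ℕ∞) := mod_cast le_top
  simpa [div_eq_inv_mul, mul_comm] using
    stmt2_general one_pos (hφ.of_le hle) (hx.of_le hle) hxper (hu.of_le hle) huper hε
end

section
/- Let φ : ℝ → ℝ be infinitely differentiable, let s₀ ∈ ℝ and let i₀ ∈ ℕ, and set i = i₀ + 1. Then there exists M₂ ≥ 0 such that for every infinitely differentiable u : ℝ → ℝ whose derivatives up to order i₀ are bounded by 1 (i.e. N := sup over s ∈ ℝ and l ≤ i₀ of |iteratedDeriv l u s| satisfies N ≤ 1) and for every s ∈ ℝ, one has |iteratedDeriv i (fun s => deriv φ (s₀ + u s)) s| ≥ |deriv (deriv φ) (s₀ + u s)| · |iteratedDeriv i u s| − M₂ · (1 + N)^i. -/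
/-! Since `(f ∘ u)' = u' • (f' ∘ u)`, the Leibniz rule writes the `(n + 1)`-st derivative of `f ∘ u`
as `D^{n+1} u • (f' ∘ u)` plus terms `D^{k+1} u • D^{n-k} (f' ∘ u)`, `k < n`, which only see the
derivatives of `u` up to order `n`. These terms are homogeneous: if `‖D^l u‖ ≤ D ^ l` for
`1 ≤ l ≤ n`, each of them is at most a constant times `D ^ (k + 1) * D ^ (n - k) = D ^ (n + 1)`. If
`‖D^l u‖ ≤ N` for all these `l`, then `D = 1 + N` is such a scale, and the constant depends only on
bounds for the derivatives of `f'` on a compact set containing the values of `u`. -/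

section

open Finset
open scoped Nat

variable {𝕜 F : Type*} [NontriviallyNormedField 𝕜] [NormedAddCommGroup F] [NormedSpace 𝕜 F]

theorem iteratedDeriv_smul_eq_sum {𝔸 : Type*} [NormedRing 𝔸] [NormedAlgebra 𝕜 𝔸] [Module 𝔸 F]
    [IsBoundedSMul 𝔸 F] [IsScalarTower 𝕜 𝔸 F] {n : ℕ} {c : 𝕜 → 𝔸} {g : 𝕜 → F} {x : 𝕜}
    (hc : ContDiffAt 𝕜 n c x) (hg : ContDiffAt 𝕜 n g x) :
    iteratedDeriv n (c • g) x =
      ∑ k ∈ range (n + 1), n.choose k • iteratedDeriv k c x • iteratedDeriv (n - k) g x := by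
  simpa only [iteratedDerivWithin_univ] using iteratedDerivWithin_smul
    (Set.mem_univ x) uniqueDiffOn_univ hc.contDiffWithinAt hg.contDiffWithinAt

theorem exists_norm_iteratedDeriv_le_of_isCompact {n : ℕ} {g : 𝕜 → F} (hg : ContDiff 𝕜 n g)
    {K : Set 𝕜} (hK : IsCompact K) :
    ∃ C : ℝ, 0 ≤ C ∧ ∀ x ∈ K, ∀ j ≤ n, ‖iteratedDeriv j g x‖ ≤ C := by
  have hcont : Continuous fun x (j : Fin (n + 1)) => iteratedDeriv j g x :=
    continuous_pi fun j => hg.continuous_iteratedDeriv j (by exact_mod_cast j.is_le)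
  obtain ⟨C, hC⟩ := hK.exists_bound_of_continuousOn hcont.continuousOn
  refine ⟨|C|, abs_nonneg C, fun x hx j hj => ?_⟩
  exact (norm_le_pi_norm _ (⟨j, Nat.lt_succ_of_le hj⟩ : Fin (n + 1))).trans
    ((hC x hx).trans (le_abs_self C))

theorem norm_iteratedDeriv_scomp_le {n : ℕ} {g : 𝕜 → F} {u : 𝕜 → 𝕜} (hg : ContDiff 𝕜 n g)
    (hu : ContDiff 𝕜 n u) {x : 𝕜} {C D : ℝ} (hC : ∀ j ≤ n, ‖iteratedDeriv j g (u x)‖ ≤ C)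
    (hD : ∀ l, 1 ≤ l → l ≤ n → ‖iteratedDeriv l u x‖ ≤ D ^ l) :
    ‖iteratedDeriv n (g ∘ u) x‖ ≤ n ! * C * D ^ n := by
  simp only [← norm_iteratedFDeriv_eq_norm_iteratedDeriv] at hC hD ⊢
  exact norm_iteratedFDeriv_comp_le hg hu le_rfl x hC hD

theorem iteratedDeriv_succ_scomp_eq_sum {n : ℕ} {f : 𝕜 → F} {u : 𝕜 → 𝕜}
    (hf : ContDiff 𝕜 (n + 1) f) (hu : ContDiff 𝕜 (n + 1) u) (x : 𝕜) :
    iteratedDeriv (n + 1) (f ∘ u) x =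
      ∑ k ∈ range n, n.choose k •
          iteratedDeriv (k + 1) u x • iteratedDeriv (n - k) (deriv f ∘ u) x +
        iteratedDeriv (n + 1) u x • deriv f (u x) := by
  have hderiv : deriv (f ∘ u) = deriv u • (deriv f ∘ u) := funext fun t =>
    deriv.scomp t (hf.differentiable (by simp) _) (hu.differentiable (by simp) t)
  have hfu : ContDiff 𝕜 n (deriv f ∘ u) := hf.deriv'.comp (hu.of_le le_self_add)
  rw [iteratedDeriv_succ', hderiv,
    iteratedDeriv_smul_eq_sum hu.deriv'.contDiffAt hfu.contDiffAt, sum_range_succ]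
  simp only [← iteratedDeriv_succ', Nat.choose_self, one_smul, Nat.sub_self, iteratedDeriv_zero,
    Function.comp_apply]

theorem norm_iteratedDeriv_succ_scomp_sub_le {n : ℕ} {f : 𝕜 → F} {u : 𝕜 → 𝕜}
    (hf : ContDiff 𝕜 (n + 1) f) (hu : ContDiff 𝕜 (n + 1) u) {x : 𝕜} {C D : ℝ}
    (hC : ∀ j ≤ n, ‖iteratedDeriv j (deriv f) (u x)‖ ≤ C)
    (hD : ∀ l, 1 ≤ l → l ≤ n → ‖iteratedDeriv l u x‖ ≤ D ^ l) :
    ‖iteratedDeriv (n + 1) (f ∘ u) x - iteratedDeriv (n + 1) u x • deriv f (u x)‖ ≤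
      (∑ k ∈ range n, n.choose k * (n - k)! : ℕ) * C * D ^ (n + 1) := by
  rw [iteratedDeriv_succ_scomp_eq_sum hf hu, add_sub_cancel_right, Nat.cast_sum, sum_mul, sum_mul]
  refine norm_sum_le_of_le _ fun k hk => ?_
  have hkn : k < n := mem_range.1 hk
  have hsub : ((n - k : ℕ) : WithTop ℕ∞) ≤ n := by exact_mod_cast n.sub_le k
  have hu_le : ‖iteratedDeriv (k + 1) u x‖ ≤ D ^ (k + 1) := hD _ k.succ_pos hkn
  have hfu_le : ‖iteratedDeriv (n - k) (deriv f ∘ u) x‖ ≤ (n - k)! * C * D ^ (n - k) :=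
    norm_iteratedDeriv_scomp_le (hf.deriv'.of_le hsub) (hu.of_le (hsub.trans le_self_add))
      (fun j hj => hC j (hj.trans (n.sub_le k))) (fun l hl hln => hD l hl (hln.trans (n.sub_le k)))
  calc ‖n.choose k • iteratedDeriv (k + 1) u x • iteratedDeriv (n - k) (deriv f ∘ u) x‖
      ≤ n.choose k * (‖iteratedDeriv (k + 1) u x‖ * ‖iteratedDeriv (n - k) (deriv f ∘ u) x‖) := by
        rw [← norm_smul]
        exact norm_nsmul_le
    _ ≤ n.choose k * (D ^ (k + 1) * ((n - k)! * C * D ^ (n - k))) :=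
        mul_le_mul_of_nonneg_left (mul_le_mul hu_le hfu_le (norm_nonneg _)
          ((norm_nonneg _).trans hu_le)) (Nat.cast_nonneg _)
    _ = (n.choose k * (n - k)! : ℕ) * C * D ^ (n + 1) := by
        rw [show n + 1 = (k + 1) + (n - k) by lia, pow_add]
        push_cast
        ring

theorem stmt5_general {n : ℕ} {f : 𝕜 → F} (hf : ContDiff 𝕜 (n + 1) f) {K : Set 𝕜}
    (hK : IsCompact K) :
    ∃ M : ℝ, 0 ≤ M ∧
      ∀ u : 𝕜 → 𝕜, ContDiff 𝕜 (n + 1) u → ∀ s : 𝕜, u s ∈ K →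
        ∀ N : ℝ, (∀ l, 1 ≤ l → l ≤ n → ‖iteratedDeriv l u s‖ ≤ N) →
          ‖deriv f (u s)‖ * ‖iteratedDeriv (n + 1) u s‖ - M * (1 + N) ^ (n + 1) ≤
            ‖iteratedDeriv (n + 1) (f ∘ u) s‖ := by
  obtain ⟨C, hC₀, hC⟩ := exists_norm_iteratedDeriv_le_of_isCompact hf.deriv' hK
  refine ⟨(∑ k ∈ range n, n.choose k * (n - k)! : ℕ) * C, by positivity, ?_⟩
  intro u hu s hs N hN
  have hscale : ∀ l, 1 ≤ l → l ≤ n → ‖iteratedDeriv l u s‖ ≤ (1 + N) ^ l := fun l hl hln => by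
    have hN₀ : 0 ≤ N := (norm_nonneg _).trans (hN l hl hln)
    calc ‖iteratedDeriv l u s‖ ≤ 1 + N := (hN l hl hln).trans (by linarith)
      _ ≤ (1 + N) ^ l := le_self_pow₀ (by linarith) (by lia)
  have herror := norm_iteratedDeriv_succ_scomp_sub_le hf hu (hC (u s) hs) hscale
  rw [mul_comm ‖deriv f (u s)‖, ← norm_smul]
  linarith [norm_le_norm_add_norm_sub (iteratedDeriv (n + 1) (f ∘ u) s)
    (iteratedDeriv (n + 1) u s • deriv f (u s))]

end

/-- Inequality (4) in the proof of Theorem 11: a Faà di Bruno type lower bound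
`|D^i (φ' ∘ (s₀ + u))| ≥ |φ'' ∘ (s₀ + u)| · |D^i u| − M₂ (1 + N)^i` with `i = i₀ + 1`,
where `N` bounds the derivatives of `u` up to order `i₀`, `N ≤ 1`, and `M₂` depends
only on `φ`, `s₀` and `i₀`. -/
theorem stmt5 (φ : ℝ → ℝ) (hφ : ContDiff ℝ (⊤ : ℕ∞) φ) (s₀ : ℝ) (i₀ : ℕ) :
    ∃ M₂ : ℝ, 0 ≤ M₂ ∧
      ∀ u : ℝ → ℝ, ContDiff ℝ (⊤ : ℕ∞) u →
        ∀ N : ℝ, (∀ l : ℕ, l ≤ i₀ → ∀ s : ℝ, |iteratedDeriv l u s| ≤ N) → N ≤ 1 →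
          ∀ s : ℝ,
            |iteratedDeriv (i₀ + 1) (fun s => deriv φ (s₀ + u s)) s| ≥
              |deriv (deriv φ) (s₀ + u s)| * |iteratedDeriv (i₀ + 1) u s| -
                M₂ * (1 + N) ^ (i₀ + 1) := by
  have hf : ContDiff ℝ (i₀ + 1) fun x => deriv φ (s₀ + x) :=
    ((contDiff_infty_iff_deriv.1 hφ).2.comp (contDiff_const.add contDiff_id)).of_le
      (by exact_mod_cast le_top)
  obtain ⟨M, hM₀, hM⟩ := stmt5_general hf (isCompact_Icc (a := (-1 : ℝ)) (b := 1))
  exact ⟨M, hM₀, fun u hu N hN hN1 s => by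
    simpa only [deriv_comp_const_add, Function.comp_def, Real.norm_eq_abs] using
      hM u (hu.of_le (by exact_mod_cast le_top)) s
        (abs_le.1 ((hN 0 i₀.zero_le s).trans hN1)) N fun l _ hl => hN l hl s⟩
end

section
/- Let i₀ ∈ ℕ be even, let n ∈ ℕ with n ≥ 1, let s₀ ∈ ℝ, and define u : ℝ → ℝ by u s = (2πn)^(−i₀−1/2) · sin(2πn(s − s₀)). Then u is infinitely differentiable and 1-periodic, the supremum over s ∈ ℝ and l ≤ i₀ of |iteratedDeriv l u s| equals (2πn)^(−1/2), and |iteratedDeriv (i₀+1) u s₀| = (2πn)^(1/2). -/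
open Real

/-!
Each derivative of `A * sin (ω * (s - s₀))` multiplies the amplitude by `ω` and advances the
phase by a quarter period. When `1 ≤ |ω|` the derivatives of order at most `k` are therefore bounded
by the amplitude `|A| * |ω| ^ k` of the last one, which is attained; when `k` is even, the
derivative of order `k + 1` is a cosine up to sign, so it reaches its amplitude at `s₀`. The choice
`A = ω ^ (-k - 1/2)` makes the two amplitudes `ω ^ (-1/2)` and `ω ^ (1/2)`.
-/

section IteratedDeriv

variable {𝕜 : Type*} [NontriviallyNormedField 𝕜]

theorem iteratedDeriv_const_mul_comp_mul_sub {l : ℕ} {f : 𝕜 → 𝕜} (hf : ContDiff 𝕜 l f)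
    (A ω s₀ s : 𝕜) :
    iteratedDeriv l (fun t ↦ A * f (ω * (t - s₀))) s =
      A * (ω ^ l * iteratedDeriv l f (ω * (s - s₀))) := by
  rw [iteratedDeriv_const_mul_field,
    iteratedDeriv_comp_sub_const (f := fun t ↦ f (ω * t)), iteratedDeriv_comp_const_mul hf]

end IteratedDeriv

theorem exists_abs_iteratedDeriv_sin_eq_one : ∀ l : ℕ, ∃ x : ℝ, |iteratedDeriv l sin x| = 1
  | 0 => ⟨π / 2, by simp⟩
  | 1 => ⟨0, by simp⟩
  | l + 2 => by simpa using exists_abs_iteratedDeriv_sin_eq_one l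

theorem abs_iteratedDeriv_succ_sin_zero_of_even {k : ℕ} (hk : Even k) :
    |iteratedDeriv (k + 1) sin 0| = 1 := by
  obtain ⟨m, rfl⟩ := hk.exists_two_nsmul
  simp

theorem abs_rpow_sub_natCast_mul_pow {ω : ℝ} (hω : 0 < ω) (r : ℝ) (k : ℕ) :
    |ω ^ (r - k)| * |ω| ^ k = ω ^ r := by
  rw [abs_of_pos (rpow_pos_of_pos hω _), abs_of_pos hω, rpow_sub_natCast hω.ne',
    div_mul_cancel₀ _ (pow_ne_zero k hω.ne')]

/-- The sinusoid with amplitude `A`, angular frequency `ω` and an upward zero at `s₀` (for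
positive `A` and `ω`), of which the test function of the theorem is an instance. -/
noncomputable def sineWave (A ω s₀ s : ℝ) : ℝ :=
  A * sin (ω * (s - s₀))

section SineWave

variable (A ω s₀ : ℝ)

theorem contDiff_sineWave {m : WithTop ℕ∞} : ContDiff ℝ m (sineWave A ω s₀) := by
  unfold sineWave
  fun_prop

theorem periodic_sineWave_two_pi_mul_int (n : ℤ) :
    Function.Periodic (sineWave A (2 * π * n) s₀) 1 := fun s ↦ by
  have phase : 2 * π * n * (s + 1 - s₀) = 2 * π * n * (s - s₀) + n * (2 * π) := by ring
  rw [sineWave, phase, sin_add_int_mul_two_pi, sineWave]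

theorem iteratedDeriv_sineWave (l : ℕ) (s : ℝ) :
    iteratedDeriv l (sineWave A ω s₀) s = A * (ω ^ l * iteratedDeriv l sin (ω * (s - s₀))) :=
  iteratedDeriv_const_mul_comp_mul_sub contDiff_sin A ω s₀ s

theorem abs_iteratedDeriv_sineWave (l : ℕ) (s : ℝ) :
    |iteratedDeriv l (sineWave A ω s₀) s| =
      |A| * |ω| ^ l * |iteratedDeriv l sin (ω * (s - s₀))| := by
  rw [iteratedDeriv_sineWave, abs_mul, abs_mul, abs_pow, mul_assoc]

theorem abs_iteratedDeriv_sineWave_le (l : ℕ) (s : ℝ) :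
    |iteratedDeriv l (sineWave A ω s₀) s| ≤ |A| * |ω| ^ l := by
  rw [abs_iteratedDeriv_sineWave]
  exact mul_le_of_le_one_right (by positivity) (abs_iteratedDeriv_sin_le_one _ _)

variable {ω}

theorem exists_abs_iteratedDeriv_sineWave_eq (hω : ω ≠ 0) (l : ℕ) :
    ∃ s, |iteratedDeriv l (sineWave A ω s₀) s| = |A| * |ω| ^ l := by
  obtain ⟨x, hx⟩ := exists_abs_iteratedDeriv_sin_eq_one l
  refine ⟨s₀ + x / ω, ?_⟩
  rw [abs_iteratedDeriv_sineWave, add_sub_cancel_left, mul_div_cancel₀ x hω, hx, mul_one]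

theorem isGreatest_abs_iteratedDeriv_sineWave (hω : 1 ≤ |ω|) (k : ℕ) :
    IsGreatest {r : ℝ | ∃ l : ℕ, l ≤ k ∧ ∃ s : ℝ, r = |iteratedDeriv l (sineWave A ω s₀) s|}
      (|A| * |ω| ^ k) := by
  constructor
  · have hω₀ : ω ≠ 0 := abs_pos.mp (one_pos.trans_le hω)
    obtain ⟨s, hs⟩ := exists_abs_iteratedDeriv_sineWave_eq A s₀ hω₀ k
    exact ⟨k, le_rfl, s, hs.symm⟩
  · rintro _ ⟨l, hl, s, rfl⟩
    calc |iteratedDeriv l (sineWave A ω s₀) s|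
      _ ≤ |A| * |ω| ^ l := abs_iteratedDeriv_sineWave_le A ω s₀ l s
      _ ≤ |A| * |ω| ^ k := by gcongr

variable (ω)

theorem abs_iteratedDeriv_succ_sineWave_self_of_even {k : ℕ} (hk : Even k) :
    |iteratedDeriv (k + 1) (sineWave A ω s₀) s₀| = |A| * |ω| ^ (k + 1) := by
  rw [abs_iteratedDeriv_sineWave, sub_self, mul_zero,
    abs_iteratedDeriv_succ_sin_zero_of_even hk, mul_one]

end SineWave

/-- The test function `u s = (2πn)^(−i₀−1/2) sin(2πn(s−s₀))` used in the proof of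
Theorem 11: it is smooth and 1-periodic, its `C^{i₀}` sup-seminorm equals
`(2πn)^(−1/2)`, and its `(i₀+1)`-st derivative at `s₀` has absolute value `(2πn)^(1/2)`. -/
theorem stmt6 (i₀ : ℕ) (hi₀ : Even i₀) (n : ℕ) (hn : 1 ≤ n) (s₀ : ℝ)
    (u : ℝ → ℝ)
    (hu : ∀ s : ℝ, u s = (2 * π * n) ^ (-(i₀ : ℝ) - 1 / 2) * Real.sin (2 * π * n * (s - s₀))) :
    ContDiff ℝ (⊤ : ℕ∞) u ∧ (∀ s : ℝ, u (s + 1) = u s) ∧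
      IsLUB {r : ℝ | ∃ l : ℕ, l ≤ i₀ ∧ ∃ s : ℝ, r = |iteratedDeriv l u s|}
        ((2 * π * n) ^ (-(1 : ℝ) / 2)) ∧
      |iteratedDeriv (i₀ + 1) u s₀| = (2 * π * n) ^ ((1 : ℝ) / 2) := by
  obtain rfl : u = sineWave ((2 * π * n) ^ (-(i₀ : ℝ) - 1 / 2)) (2 * π * n) s₀ := funext hu
  have hω : 1 ≤ 2 * π * n :=
    one_le_mul_of_one_le_of_one_le (by linarith [pi_gt_three]) (mod_cast hn)
  have hω₀ : 0 < 2 * π * n := one_pos.trans_le hω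
  refine ⟨contDiff_sineWave _ _ _, mod_cast periodic_sineWave_two_pi_mul_int _ s₀ n, ?_, ?_⟩
  · have exponent : -(i₀ : ℝ) - 1 / 2 = -1 / 2 - i₀ := by ring
    rw [← abs_rpow_sub_natCast_mul_pow hω₀ (-1 / 2) i₀, ← exponent]
    exact (isGreatest_abs_iteratedDeriv_sineWave _ s₀ (hω.trans (le_abs_self _)) i₀).isLUB
  · have exponent : -(i₀ : ℝ) - 1 / 2 = 1 / 2 - (i₀ + 1 : ℕ) := by push_cast; ring
    rw [← abs_rpow_sub_natCast_mul_pow hω₀ (1 / 2) (i₀ + 1), ← exponent]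
    exact abs_iteratedDeriv_succ_sineWave_self_of_even _ _ s₀ hi₀
end

section
/- Let b₀ : ℝ → ℝ be defined by b₀ s = 1 for |s| ≤ 1, b₀ s = (1 + Real.exp(((2 − |s|)^2 − 1)⁻¹ · (2 − |s|)))⁻¹ for 1 < |s| < 3, and b₀ s = 0 for |s| ≥ 3. Let N ≥ 1, let α : Fin N → ℕ be a multi-index, let 0 < δ ≤ 1, and define f : (Fin N → ℝ) → ℝ by f η = (∏_{i} b₀(δ⁻¹ · η i)) · (∏_{i} (η i)^(α i)). Then for every multi-index κ : Fin N → ℕ, the iterated partial derivative ∂^κ f (taking κ i one-variable partial derivatives in the i-th coordinate) evaluated at 0 equals ∏_{i} (α i)! if κ = α, and equals 0 otherwise. -/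
/-- The partial derivative of `f : ℝ^N → ℝ` in the `i`-th coordinate. -/
noncomputable def partialDerivCoord {N : ℕ} (i : Fin N) (f : (Fin N → ℝ) → ℝ) :
    (Fin N → ℝ) → ℝ :=
  fun η => deriv (fun t : ℝ => f (Function.update η i t)) (η i)

/-- The iterated partial derivative `∂^κ f` of `f : ℝ^N → ℝ` associated to a
multi-index `κ : Fin N → ℕ`: one differentiates `κ i` times in the `i`-th
coordinate, for `i = N-1, …, 0` (the order is immaterial for smooth `f`). -/
noncomputable def multiPartialDeriv {N : ℕ} (κ : Fin N → ℕ) (f : (Fin N → ℝ) → ℝ) :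
    (Fin N → ℝ) → ℝ :=
  (List.finRange N).foldr (fun i g => (partialDerivCoord i)^[κ i] g) f

/-! Near `0` every factor of the cutoff equals `1`, so `f` has the germ of the monomial
`∏ i, η i ^ α i` there. Iterated partial derivatives depend only on the germ, and on a product of
one-variable functions they act factor by factor, so the claim reduces to the iterated derivatives
of `t ↦ t ^ n` at `0`. -/

open scoped Topology

section Locality

variable {N : ℕ} {f g : (Fin N → ℝ) → ℝ} {x : Fin N → ℝ}

lemma partialDerivCoord_eventuallyEq (i : Fin N) (h : f =ᶠ[𝓝 x] g) :
    partialDerivCoord i f =ᶠ[𝓝 x] partialDerivCoord i g := by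
  filter_upwards [h.eventuallyEq_nhds] with y hy
  have hline : Filter.Tendsto (Function.update y i) (𝓝 (y i)) (𝓝 y) :=
    (continuous_const.update i continuous_id).tendsto' _ _ (Function.update_eq_self i y)
  exact (hy.comp_tendsto hline).deriv_eq

lemma iterate_partialDerivCoord_eventuallyEq (i : Fin N) (k : ℕ) (h : f =ᶠ[𝓝 x] g) :
    (partialDerivCoord i)^[k] f =ᶠ[𝓝 x] (partialDerivCoord i)^[k] g := by
  induction k with
  | zero => exact h
  | succ k ih =>
    simpa only [Function.iterate_succ_apply'] using partialDerivCoord_eventuallyEq i ih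

lemma multiPartialDeriv_eventuallyEq (κ : Fin N → ℕ) (h : f =ᶠ[𝓝 x] g) :
    multiPartialDeriv κ f =ᶠ[𝓝 x] multiPartialDeriv κ g := by
  unfold multiPartialDeriv
  induction List.finRange N with
  | nil => exact h
  | cons i l ih => exact iterate_partialDerivCoord_eventuallyEq i (κ i) ih

end Locality

section ProductFunctions

variable {N : ℕ} (h : Fin N → ℝ → ℝ)

lemma partialDerivCoord_prod (i : Fin N) :
    partialDerivCoord i (fun η => ∏ j, h j (η j)) =
      fun η => ∏ j, Function.update h i (deriv (h i)) j (η j) := by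
  funext η
  have hline (t : ℝ) : ∏ j, h j (Function.update η i t j) =
      h i t * ∏ j ∈ Finset.univ \ {i}, h j (η j) := by
    simp only [Function.apply_update h, Finset.prod_update_of_mem (Finset.mem_univ i)]
  have hderiv : ∏ j, Function.update h i (deriv (h i)) j (η j) =
      deriv (h i) (η i) * ∏ j ∈ Finset.univ \ {i}, h j (η j) := by
    simp only [Function.apply_update (fun j (u : ℝ → ℝ) => u (η j)),
      Finset.prod_update_of_mem (Finset.mem_univ i)]
  simp only [partialDerivCoord, hline, hderiv, deriv_mul_const_field]

lemma partialDerivCoord_prod_iteratedDeriv (m : Fin N → ℕ) (i : Fin N) :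
    partialDerivCoord i (fun η => ∏ j, iteratedDeriv (m j) (h j) (η j)) =
      fun η => ∏ j, iteratedDeriv ((m + Pi.single i 1 : Fin N → ℕ) j) (h j) (η j) := by
  rw [partialDerivCoord_prod fun j => iteratedDeriv (m j) (h j)]
  funext η
  refine Finset.prod_congr rfl fun j _ => ?_
  obtain rfl | hj := eq_or_ne j i
  · simp [iteratedDeriv_succ]
  · simp [hj]

lemma iterate_partialDerivCoord_prod_iteratedDeriv (m : Fin N → ℕ) (i : Fin N) (k : ℕ) :
    (partialDerivCoord i)^[k] (fun η => ∏ j, iteratedDeriv (m j) (h j) (η j)) =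
      fun η => ∏ j, iteratedDeriv ((m + Pi.single i k : Fin N → ℕ) j) (h j) (η j) := by
  induction k with
  | zero => simp
  | succ k ih =>
    rw [Function.iterate_succ_apply', ih, partialDerivCoord_prod_iteratedDeriv, add_assoc,
      ← Pi.single_add]

lemma multiPartialDeriv_prod (κ : Fin N → ℕ) :
    multiPartialDeriv κ (fun η => ∏ j, h j (η j)) =
      fun η => ∏ j, iteratedDeriv (κ j) (h j) (η j) := by
  have hfoldr (l : List (Fin N)) :
      l.foldr (fun i g => (partialDerivCoord i)^[κ i] g) (fun η => ∏ j, h j (η j)) =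
        fun η => ∏ j, iteratedDeriv ((l.map fun i => Pi.single i (κ i)).sum j) (h j) (η j) := by
    induction l with
    | nil => simp
    | cons i l ih =>
      rw [List.foldr_cons, ih, iterate_partialDerivCoord_prod_iteratedDeriv, List.map_cons,
        List.sum_cons, add_comm]
  have hκ : ((List.finRange N).map fun i => Pi.single i (κ i)).sum = κ := by
    rw [← Fin.sum_univ_def, Finset.univ_sum_single]
  rw [multiPartialDeriv, hfoldr, hκ]

end ProductFunctions

lemma multiPartialDeriv_prod_pow_zero {N : ℕ} (α κ : Fin N → ℕ) :
    multiPartialDeriv κ (fun η => ∏ i, η i ^ α i) 0 =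
      if κ = α then ∏ i, ((α i).factorial : ℝ) else 0 := by
  rw [multiPartialDeriv_prod fun i t => t ^ α i]
  simp only [Pi.zero_apply, iteratedDeriv_fun_pow_zero, Nat.cast_ite, Nat.cast_zero,
    Finset.prod_ite_zero, Finset.mem_univ, true_imp_iff, funext_iff]

lemma eventually_prod_comp_const_mul_eq_one {ι R M : Type*} [Fintype ι] [MulZeroClass R]
    [TopologicalSpace R] [ContinuousMul R] [CommMonoid M] {b : R → M}
    (hb : ∀ᶠ s in 𝓝 0, b s = 1) (c : R) :
    ∀ᶠ η : ι → R in 𝓝 0, ∏ i, b (c * η i) = 1 := by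
  have hfactor (i : ι) : ∀ᶠ η : ι → R in 𝓝 0, b (c * η i) = 1 := by
    have hcont : Continuous fun η : ι → R => c * η i := by fun_prop
    exact (hcont.tendsto' 0 0 (mul_zero c)).eventually hb
  filter_upwards [Filter.eventually_all.2 hfactor] with η hη
  exact Finset.prod_eq_one fun i _ => hη i

theorem stmt8_general {N : ℕ} {f : (Fin N → ℝ) → ℝ} {α : Fin N → ℕ}
    (hf : f =ᶠ[𝓝 0] fun η => ∏ i, η i ^ α i) (κ : Fin N → ℕ) :
    multiPartialDeriv κ f 0 = if κ = α then ∏ i, ((α i).factorial : ℝ) else 0 :=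
  (multiPartialDeriv_eventuallyEq κ hf).eq_of_nhds.trans (multiPartialDeriv_prod_pow_zero α κ)

/-- First claim of Remarks 5(a): for the bump-times-monomial function
`f η = (∏ i, b₀(δ⁻¹ η i)) · ∏ i, (η i)^(α i)`, the iterated partial derivative
`∂^κ f` at `0` equals `∏ i, (α i)!` if `κ = α` and `0` otherwise. -/
theorem stmt8 (b₀ : ℝ → ℝ)
    (h1 : ∀ s : ℝ, |s| ≤ 1 → b₀ s = 1)
    (h2 : ∀ s : ℝ, 1 < |s| → |s| < 3 →
      b₀ s = (1 + Real.exp (((2 - |s|) ^ 2 - 1)⁻¹ * (2 - |s|)))⁻¹)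
    (h3 : ∀ s : ℝ, 3 ≤ |s| → b₀ s = 0)
    (N : ℕ) (hN : 1 ≤ N) (α : Fin N → ℕ) (δ : ℝ) (hδ : 0 < δ) (hδ1 : δ ≤ 1)
    (f : (Fin N → ℝ) → ℝ)
    (hf : ∀ η : Fin N → ℝ, f η = (∏ i, b₀ (δ⁻¹ * η i)) * ∏ i, (η i) ^ (α i)) :
    ∀ κ : Fin N → ℕ,
      multiPartialDeriv κ f (0 : Fin N → ℝ) =
        if κ = α then (∏ i, ((α i).factorial : ℝ)) else 0 := by
  have hb : ∀ᶠ s in 𝓝 0, b₀ s = 1 := (eventually_abs_sub_lt 0 one_pos).mono fun s hs =>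
    h1 s (by simpa using hs.le)
  exact stmt8_general <| (eventually_prod_comp_const_mul_eq_one hb δ⁻¹).mono fun η hη => by
    rw [hf, hη, one_mul]
end

section
/- Let b₀ : ℝ → ℝ be defined by b₀ s = 1 for |s| ≤ 1, b₀ s = (1 + Real.exp(((2 − |s|)^2 − 1)⁻¹ · (2 − |s|)))⁻¹ for 1 < |s| < 3, and b₀ s = 0 for |s| ≥ 3. Let k ∈ ℕ and t₀ ∈ ℝ. For δ with 0 < δ ≤ 1 define g_δ : ℝ → ℝ by g_δ t = δ^(−1/2) · b₀(δ⁻¹(t − t₀)) · (t − t₀)^(k+1). Then: (i) for each such δ, g_δ is infinitely differentiable and iteratedDeriv (k+1) g_δ t₀ = δ^(−1/2) · (k+1)!; (ii) there exists M ≥ 0 such that for all δ with 0 < δ ≤ 1, all l ≤ k, and all t ∈ ℝ, |iteratedDeriv l g_δ t| ≤ δ^(1/2) · M. -/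
/-!
With `f s = b s * s ^ m`, the function `b (δ⁻¹ * (t - a)) * (t - a) ^ m` is
`δ ^ m * f (δ⁻¹ * (t - a))`, so its `l`-th derivative is `δ ^ (m - l)` times a rescaled derivative
of `f`, which is bounded when `b` has compact support. For `l < m` and `δ ≤ 1` a factor `δ`
survives and turns `δ ^ (-1/2)` into `δ ^ (1/2)`; for `l = m` Leibniz' rule gives `m! * b 0` at `a`.

The concrete profile is smooth by partial fractions: with `r = |s|`,
`(2 - r) / ((2 - r) ^ 2 - 1) = 1 / (2 * (3 - r)) - 1 / (2 * (r - 1))`, so on `1 < r < 3` it is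
`E (2 * (3 - r)) / (E (2 * (3 - r)) + E (2 * (r - 1)))` with `E x = exp (-1 / x)`, and extending
`E` by zero gives the constant pieces as well.
-/

open Filter Topology
open scoped ContDiff

section IteratedDeriv

variable {𝕜 F : Type*} [NontriviallyNormedField 𝕜] [NormedAddCommGroup F] [NormedSpace 𝕜 F]

theorem iteratedDeriv_comp_const_mul_sub {n : ℕ} {f : 𝕜 → F} (hf : ContDiff 𝕜 n f) (c a t : 𝕜) :
    iteratedDeriv n (fun t ↦ f (c * (t - a))) t = c ^ n • iteratedDeriv n f (c * (t - a)) := by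
  rw [iteratedDeriv_comp_sub_const n (fun t ↦ f (c * t)) a, iteratedDeriv_comp_const_smul hf]

theorem iteratedDeriv_mul_sub_pow_self {n : ℕ} {f : 𝕜 → 𝕜} {a : 𝕜} (hf : ContDiffAt 𝕜 n f a) :
    iteratedDeriv n (fun t ↦ f t * (t - a) ^ n) a = f a * n.factorial := by
  have hpow (i : ℕ) :
      iteratedDeriv i (fun t ↦ (t - a) ^ n) a = if i = n then (n.factorial : 𝕜) else 0 := by
    rw [iteratedDeriv_comp_sub_const i (fun t ↦ t ^ n) a]
    simp only [sub_self, iteratedDeriv_fun_pow_zero, Nat.cast_ite, Nat.cast_zero]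
  rw [iteratedDeriv_fun_mul hf (by fun_prop), Finset.sum_eq_single_of_mem 0 (by simp)]
  · simp [hpow]
  · intro i hi hi0
    rw [hpow, if_neg (by grind), mul_zero]

theorem hasCompactSupport_iteratedDeriv {f : 𝕜 → F} (hf : HasCompactSupport f) (n : ℕ) :
    HasCompactSupport (iteratedDeriv n f) := by
  induction n with
  | zero => simpa only [iteratedDeriv_zero] using hf
  | succ n ih => simpa only [iteratedDeriv_succ] using ih.deriv

theorem exists_forall_norm_iteratedDeriv_le {n : ℕ} {f : 𝕜 → F} (hf : ContDiff 𝕜 n f)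
    (hsupp : HasCompactSupport f) :
    ∃ M : ℝ, 0 ≤ M ∧ ∀ l ≤ n, ∀ x, ‖iteratedDeriv l f x‖ ≤ M := by
  have hbound (l : Fin (n + 1)) : ∃ C, ∀ x, ‖iteratedDeriv l f x‖ ≤ C :=
    (hf.continuous_iteratedDeriv l (mod_cast l.is_le)).bounded_above_of_compact_support
      (hasCompactSupport_iteratedDeriv hsupp l)
  choose C hC using hbound
  have hC0 (l : Fin (n + 1)) : 0 ≤ C l := (norm_nonneg _).trans (hC l 0)
  refine ⟨∑ l, C l, Finset.sum_nonneg fun l _ ↦ hC0 l, fun l hl x ↦ ?_⟩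
  exact (hC ⟨l, Nat.lt_succ_of_le hl⟩ x).trans
    (Finset.single_le_sum (fun l _ ↦ hC0 l) (Finset.mem_univ _))

end IteratedDeriv

section ScaledMonomialBump

variable {𝕜 : Type*} [NontriviallyNormedField 𝕜] {b : 𝕜 → 𝕜} {m : ℕ}

/-- The monomial `(t - a) ^ m` localized at scale `δ` around `a` by the bump profile `b`. The
normalizing prefactor `δ ^ (-1/2)` of the paper is left out. -/
def scaledMonomialBump (b : 𝕜 → 𝕜) (m : ℕ) (a δ t : 𝕜) : 𝕜 :=
  b (δ⁻¹ * (t - a)) * (t - a) ^ m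

theorem contDiff_scaledMonomialBump {n : WithTop ℕ∞} (hb : ContDiff 𝕜 n b) (m : ℕ) (a δ : 𝕜) :
    ContDiff 𝕜 n (scaledMonomialBump b m a δ) := by
  unfold scaledMonomialBump
  fun_prop

theorem iteratedDeriv_scaledMonomialBump_self (hb : ContDiff 𝕜 m b) (a δ : 𝕜) :
    iteratedDeriv m (scaledMonomialBump b m a δ) a = b 0 * m.factorial := by
  have hcomp : ContDiff 𝕜 m fun t ↦ b (δ⁻¹ * (t - a)) := by fun_prop
  unfold scaledMonomialBump
  rw [iteratedDeriv_mul_sub_pow_self hcomp.contDiffAt, sub_self, mul_zero]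

theorem scaledMonomialBump_eq_pow_mul {δ : 𝕜} (hδ : δ ≠ 0) (b : 𝕜 → 𝕜) (m : ℕ) (a : 𝕜) :
    scaledMonomialBump b m a δ = fun t ↦ δ ^ m * scaledMonomialBump b m 0 1 (δ⁻¹ * (t - a)) := by
  funext t
  simp only [scaledMonomialBump, inv_one, one_mul, sub_zero, mul_pow, inv_pow]
  field_simp

theorem iteratedDeriv_scaledMonomialBump {δ : 𝕜} (hδ : δ ≠ 0) {l : ℕ} (hl : l ≤ m)
    (hb : ContDiff 𝕜 l b) (a t : 𝕜) :
    iteratedDeriv l (scaledMonomialBump b m a δ) t =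
      δ ^ (m - l) * iteratedDeriv l (scaledMonomialBump b m 0 1) (δ⁻¹ * (t - a)) := by
  rw [scaledMonomialBump_eq_pow_mul hδ, iteratedDeriv_const_mul_field,
    iteratedDeriv_comp_const_mul_sub (contDiff_scaledMonomialBump hb m 0 1), smul_eq_mul,
    ← mul_assoc, inv_pow, pow_sub₀ δ hδ hl]

theorem hasCompactSupport_scaledMonomialBump {δ : 𝕜} (hδ : δ ≠ 0) (hb : HasCompactSupport b)
    (m : ℕ) (a : 𝕜) : HasCompactSupport (scaledMonomialBump b m a δ) :=
  (hb.comp_homeomorph ((Homeomorph.subRight a).trans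
    (Homeomorph.mulLeft₀ δ⁻¹ (inv_ne_zero hδ)))).mul_right

theorem exists_forall_norm_iteratedDeriv_scaledMonomialBump_le (hb : ContDiff 𝕜 m b)
    (hsupp : HasCompactSupport b) :
    ∃ M : ℝ, 0 ≤ M ∧ ∀ a δ : 𝕜, δ ≠ 0 → ∀ l ≤ m, ∀ t,
      ‖iteratedDeriv l (scaledMonomialBump b m a δ) t‖ ≤ ‖δ‖ ^ (m - l) * M := by
  obtain ⟨M, hM0, hM⟩ := exists_forall_norm_iteratedDeriv_le (contDiff_scaledMonomialBump hb m 0 1)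
    (hasCompactSupport_scaledMonomialBump one_ne_zero hsupp m 0)
  refine ⟨M, hM0, fun a δ hδ l hl t ↦ ?_⟩
  rw [iteratedDeriv_scaledMonomialBump hδ hl (hb.of_le (mod_cast hl)), norm_mul, norm_pow]
  gcongr
  exact hM l hl _

end ScaledMonomialBump

section GlueQuotient

/-- The smooth transition from `0` (where `x ≤ 0`) to `1` (where `y ≤ 0`) built from
`expNegInvGlue`, as a function of two variables; `Real.smoothTransition x` is
`glueQuotient x (1 - x)`. Where both `x ≤ 0` and `y ≤ 0` it has the junk value `0 / 0 = 0`. -/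
noncomputable def glueQuotient (x y : ℝ) : ℝ :=
  expNegInvGlue x / (expNegInvGlue x + expNegInvGlue y)

theorem glueQuotient_of_left_nonpos {x : ℝ} (hx : x ≤ 0) (y : ℝ) : glueQuotient x y = 0 := by
  rw [glueQuotient, expNegInvGlue.zero_of_nonpos hx, zero_div]

theorem glueQuotient_of_right_nonpos {x y : ℝ} (hx : 0 < x) (hy : y ≤ 0) :
    glueQuotient x y = 1 := by
  rw [glueQuotient, expNegInvGlue.zero_of_nonpos hy, add_zero,
    div_self (expNegInvGlue.pos_of_pos hx).ne']

theorem glueQuotient_of_pos {x y : ℝ} (hx : 0 < x) (hy : 0 < y) :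
    glueQuotient x y = (1 + Real.exp (x⁻¹ - y⁻¹))⁻¹ := by
  rw [glueQuotient, expNegInvGlue, expNegInvGlue, if_neg hx.not_ge, if_neg hy.not_ge,
    show x⁻¹ - y⁻¹ = -y⁻¹ - -x⁻¹ by ring, Real.exp_sub]
  field_simp

theorem contDiff_glueQuotient {E : Type*} [NormedAddCommGroup E] [NormedSpace ℝ E] {n : ℕ∞}
    {u v : E → ℝ} (hu : ContDiff ℝ n u) (hv : ContDiff ℝ n v) (huv : ∀ z, 0 < u z ∨ 0 < v z) :
    ContDiff ℝ n fun z ↦ glueQuotient (u z) (v z) := by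
  have hdenom (z : E) : expNegInvGlue (u z) + expNegInvGlue (v z) ≠ 0 := by
    rcases huv z with h | h
    · exact (add_pos_of_pos_of_nonneg (expNegInvGlue.pos_of_pos h) (expNegInvGlue.nonneg _)).ne'
    · exact (add_pos_of_nonneg_of_pos (expNegInvGlue.nonneg _) (expNegInvGlue.pos_of_pos h)).ne'
  have hEu : ContDiff ℝ n fun z ↦ expNegInvGlue (u z) := expNegInvGlue.contDiff.comp hu
  have hEv : ContDiff ℝ n fun z ↦ expNegInvGlue (v z) := expNegInvGlue.contDiff.comp hv
  exact hEu.div (hEu.add hEv) hdenom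

theorem contDiff_comp_norm_of_eventuallyEq_const {E F : Type*} [NormedAddCommGroup E]
    [InnerProductSpace ℝ E] [NormedAddCommGroup F] [NormedSpace ℝ F] {n : WithTop ℕ∞}
    {f : ℝ → F} {c : F} (hf : ContDiff ℝ n f) (hc : f =ᶠ[𝓝 0] fun _ ↦ c) :
    ContDiff ℝ n fun x : E ↦ f ‖x‖ := by
  rw [contDiff_iff_contDiffAt]
  intro x
  rcases eq_or_ne x 0 with rfl | hx
  · have hnorm : Tendsto (fun x : E ↦ ‖x‖) (𝓝 0) (𝓝 0) := tendsto_norm_zero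
    exact contDiffAt_const.congr_of_eventuallyEq (hnorm.eventually hc)
  · exact hf.contDiffAt.comp x (contDiffAt_norm ℝ hx)

theorem contDiff_glueQuotient_norm {E : Type*} [NormedAddCommGroup E] [InnerProductSpace ℝ E]
    {n : ℕ∞} {c r R : ℝ} (hc : 0 < c) (hr : 0 < r) (hrR : r < R) :
    ContDiff ℝ n fun x : E ↦ glueQuotient (c * (R - ‖x‖)) (c * (‖x‖ - r)) := by
  refine contDiff_comp_norm_of_eventuallyEq_const (c := 1)
    (f := fun ρ ↦ glueQuotient (c * (R - ρ)) (c * (ρ - r)))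
    (contDiff_glueQuotient (by fun_prop) (by fun_prop) fun ρ ↦ ?_) ?_
  · rcases lt_or_ge ρ R with h | h
    · exact .inl (mul_pos hc (sub_pos.2 h))
    · exact .inr (mul_pos hc (sub_pos.2 (hrR.trans_le h)))
  · filter_upwards [gt_mem_nhds hr] with ρ hρ
    exact glueQuotient_of_right_nonpos (mul_pos hc (sub_pos.2 (hρ.trans hrR)))
      (mul_nonpos_of_nonneg_of_nonpos hc.le (sub_nonpos.2 hρ.le))

theorem glueQuotient_two_mul_sub {r : ℝ} (h1 : 1 < r) (h3 : r < 3) :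
    glueQuotient (2 * (3 - r)) (2 * (r - 1)) =
      (1 + Real.exp (((2 - r) ^ 2 - 1)⁻¹ * (2 - r)))⁻¹ := by
  have hinner : r - 1 ≠ 0 := (sub_pos.2 h1).ne'
  have houter : 3 - r ≠ 0 := (sub_pos.2 h3).ne'
  have partial_fractions :
      ((2 - r) ^ 2 - 1)⁻¹ * (2 - r) = (2 * (3 - r))⁻¹ - (2 * (r - 1))⁻¹ := by
    rw [show (2 - r) ^ 2 - 1 = -((r - 1) * (3 - r)) by ring]
    field_simp
    ring
  rw [glueQuotient_of_pos (by linarith) (by linarith), partial_fractions]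

theorem eq_glueQuotient_abs {b : ℝ → ℝ} (h1 : ∀ s : ℝ, |s| ≤ 1 → b s = 1)
    (h2 : ∀ s : ℝ, 1 < |s| → |s| < 3 →
      b s = (1 + Real.exp (((2 - |s|) ^ 2 - 1)⁻¹ * (2 - |s|)))⁻¹)
    (h3 : ∀ s : ℝ, 3 ≤ |s| → b s = 0) :
    b = fun s ↦ glueQuotient (2 * (3 - |s|)) (2 * (|s| - 1)) := by
  funext s
  rcases le_or_gt |s| 1 with hs1 | hs1
  · rw [h1 s hs1, glueQuotient_of_right_nonpos (by linarith) (by linarith)]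
  rcases lt_or_ge |s| 3 with hs3 | hs3
  · rw [h2 s hs1 hs3, glueQuotient_two_mul_sub hs1 hs3]
  · rw [h3 s hs3, glueQuotient_of_left_nonpos (by linarith)]

theorem contDiff_of_eq_logistic_of_abs {b : ℝ → ℝ} (h1 : ∀ s : ℝ, |s| ≤ 1 → b s = 1)
    (h2 : ∀ s : ℝ, 1 < |s| → |s| < 3 →
      b s = (1 + Real.exp (((2 - |s|) ^ 2 - 1)⁻¹ * (2 - |s|)))⁻¹)
    (h3 : ∀ s : ℝ, 3 ≤ |s| → b s = 0) :
    ContDiff ℝ ∞ b := by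
  rw [eq_glueQuotient_abs h1 h2 h3]
  exact contDiff_glueQuotient_norm two_pos one_pos (by norm_num)

end GlueQuotient

theorem hasCompactSupport_of_forall_le_norm {E F : Type*} [SeminormedAddCommGroup E] [ProperSpace E]
    [Zero F] {f : E → F} {R : ℝ} (hf : ∀ x, R ≤ ‖x‖ → f x = 0) : HasCompactSupport f :=
  .of_support_subset_isCompact (isCompact_closedBall 0 R) fun x hx ↦
    mem_closedBall_zero_iff.2 (le_of_not_ge (mt (hf x) hx))

theorem stmt10_general {b : ℝ → ℝ} (hb : ContDiff ℝ ∞ b) (hsupp : HasCompactSupport b)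
    (hb0 : b 0 = 1) (k : ℕ) (t₀ : ℝ) (g : ℝ → ℝ → ℝ)
    (hg : ∀ δ : ℝ, 0 < δ → δ ≤ 1 → ∀ t : ℝ,
      g δ t = δ ^ (-(1 : ℝ) / 2) * b (δ⁻¹ * (t - t₀)) * (t - t₀) ^ (k + 1)) :
    (∀ δ : ℝ, 0 < δ → δ ≤ 1 →
      ContDiff ℝ ∞ (g δ) ∧
        iteratedDeriv (k + 1) (g δ) t₀ = δ ^ (-(1 : ℝ) / 2) * ((k + 1).factorial : ℝ)) ∧
    ∃ M : ℝ, 0 ≤ M ∧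
      ∀ δ : ℝ, 0 < δ → δ ≤ 1 → ∀ l : ℕ, l ≤ k → ∀ t : ℝ,
        |iteratedDeriv l (g δ) t| ≤ δ ^ ((1 : ℝ) / 2) * M := by
  have hg_eq {δ : ℝ} (hδ0 : 0 < δ) (hδ1 : δ ≤ 1) :
      g δ = fun t ↦ δ ^ (-(1 : ℝ) / 2) * scaledMonomialBump b (k + 1) t₀ δ t :=
    funext fun t ↦ (hg δ hδ0 hδ1 t).trans (mul_assoc ..)
  have hb_fin : ContDiff ℝ (k + 1 : ℕ) b := hb.of_le (mod_cast le_top)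
  refine ⟨fun δ hδ0 hδ1 ↦ ?_, ?_⟩
  · rw [hg_eq hδ0 hδ1, iteratedDeriv_const_mul_field,
      iteratedDeriv_scaledMonomialBump_self hb_fin, hb0, one_mul]
    exact ⟨contDiff_const.mul (contDiff_scaledMonomialBump hb _ _ _), rfl⟩
  · obtain ⟨M, hM0, hM⟩ := exists_forall_norm_iteratedDeriv_scaledMonomialBump_le hb_fin hsupp
    refine ⟨M, hM0, fun δ hδ0 hδ1 l hl t ↦ ?_⟩
    have hpow : δ ^ (k + 1 - l) ≤ δ := pow_le_of_le_one hδ0.le hδ1 (by lia)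
    rw [hg_eq hδ0 hδ1, iteratedDeriv_const_mul_field, abs_mul,
      abs_of_pos (Real.rpow_pos_of_pos hδ0 _)]
    calc δ ^ (-(1 : ℝ) / 2) * |iteratedDeriv l (scaledMonomialBump b (k + 1) t₀ δ) t|
      _ ≤ δ ^ (-(1 : ℝ) / 2) * (δ ^ (k + 1 - l) * M) := by
        have hderiv := hM t₀ δ hδ0.ne' l (by lia) t
        rw [Real.norm_eq_abs, Real.norm_of_nonneg hδ0.le] at hderiv
        gcongr
      _ ≤ δ ^ (-(1 : ℝ) / 2) * (δ * M) := by gcongr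
      _ = δ ^ ((1 : ℝ) / 2) * M := by
        rw [← mul_assoc, ← Real.rpow_add_one hδ0.ne']
        norm_num

/-- The one-dimensional scaled bump-times-monomial function of Remarks 5(b):
`g_δ t = δ^(−1/2) b₀(δ⁻¹(t−t₀)) (t−t₀)^(k+1)` is smooth with
`D^(k+1) g_δ (t₀) = δ^(−1/2) (k+1)!`, while its derivatives up to order `k` are
bounded by `δ^(1/2) · M` with `M` independent of `δ ∈ (0,1]`. -/
theorem stmt10 (b₀ : ℝ → ℝ)
    (h1 : ∀ s : ℝ, |s| ≤ 1 → b₀ s = 1)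
    (h2 : ∀ s : ℝ, 1 < |s| → |s| < 3 →
      b₀ s = (1 + Real.exp (((2 - |s|) ^ 2 - 1)⁻¹ * (2 - |s|)))⁻¹)
    (h3 : ∀ s : ℝ, 3 ≤ |s| → b₀ s = 0)
    (k : ℕ) (t₀ : ℝ) (g : ℝ → ℝ → ℝ)
    (hg : ∀ δ : ℝ, 0 < δ → δ ≤ 1 → ∀ t : ℝ,
      g δ t = δ ^ (-(1 : ℝ) / 2) * b₀ (δ⁻¹ * (t - t₀)) * (t - t₀) ^ (k + 1)) :
    (∀ δ : ℝ, 0 < δ → δ ≤ 1 →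
      ContDiff ℝ (⊤ : ℕ∞) (g δ) ∧
        iteratedDeriv (k + 1) (g δ) t₀ = δ ^ (-(1 : ℝ) / 2) * ((k + 1).factorial : ℝ)) ∧
    ∃ M : ℝ, 0 ≤ M ∧
      ∀ δ : ℝ, 0 < δ → δ ≤ 1 → ∀ l : ℕ, l ≤ k → ∀ t : ℝ,
        |iteratedDeriv l (g δ) t| ≤ δ ^ ((1 : ℝ) / 2) * M :=
  stmt10_general (contDiff_of_eq_logistic_of_abs h1 h2 h3) (hasCompactSupport_of_forall_le_norm h3)
    (h1 0 (by simp)) k t₀ g hg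
end

section
/- Let x : ℝ → ℝ be infinitely differentiable and define x̄ : ℝ × ℝ → ℝ by x̄ (s, t) = x (s + t). Then x̄ is infinitely differentiable, the map x ↦ x̄ is linear in x, and for every n ∈ ℕ and every (s, t) ∈ ℝ × ℝ one has ‖iteratedFDeriv ℝ n x̄ (s, t)‖ ≤ 2^n · |iteratedDeriv n x (s + t)|. -/
section SeminormedSpace

variable (𝕜 E : Type*) [NontriviallyNormedField 𝕜] [SeminormedAddCommGroup E] [NormedSpace 𝕜 E]

theorem norm_fst_add_snd_le_two :
    ‖ContinuousLinearMap.fst 𝕜 E E + ContinuousLinearMap.snd 𝕜 E E‖ ≤ 2 :=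
  calc ‖ContinuousLinearMap.fst 𝕜 E E + ContinuousLinearMap.snd 𝕜 E E‖
      ≤ ‖ContinuousLinearMap.fst 𝕜 E E‖ + ‖ContinuousLinearMap.snd 𝕜 E E‖ := norm_add_le _ _
    _ ≤ 1 + 1 := add_le_add (ContinuousLinearMap.norm_fst_le 𝕜 E E)
        (ContinuousLinearMap.norm_snd_le 𝕜 E E)
    _ = 2 := one_add_one_eq_two

end SeminormedSpace

section NormedSpace

variable {𝕜 E F G : Type*} [NontriviallyNormedField 𝕜]
  [NormedAddCommGroup E] [NormedSpace 𝕜 E]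
  [NormedAddCommGroup F] [NormedSpace 𝕜 F]
  [NormedAddCommGroup G] [NormedSpace 𝕜 G]

theorem iteratedFDeriv_comp_right_of_contDiffAt (g : G →L[𝕜] E) {f : E → F} {n : ℕ} {p : G}
    (hf : ContDiffAt 𝕜 n f (g p)) :
    iteratedFDeriv 𝕜 n (f ∘ g) p =
      (iteratedFDeriv 𝕜 n f (g p)).compContinuousLinearMap fun _ => g := by
  obtain ⟨u, u_open, gp_mem, hfu⟩ :
      ∃ u : Set E, IsOpen u ∧ g p ∈ u ∧ ContDiffOn 𝕜 n f u := by
    obtain ⟨v, v_mem, hfv⟩ := hf.contDiffOn le_rfl (by simp)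
    obtain ⟨u, u_sub, u_open, gp_mem⟩ := mem_nhds_iff.mp v_mem
    exact ⟨u, u_open, gp_mem, hfv.mono (by simpa using u_sub)⟩
  have preimage_open : IsOpen (g ⁻¹' u) := u_open.preimage g.continuous
  rw [← iteratedFDerivWithin_of_isOpen n preimage_open gp_mem,
    ← iteratedFDerivWithin_of_isOpen n u_open gp_mem]
  exact g.iteratedFDerivWithin_comp_right hfu u_open.uniqueDiffOn preimage_open.uniqueDiffOn
    gp_mem le_rfl

theorem norm_iteratedFDeriv_comp_right_le (g : G →L[𝕜] E) {f : E → F} {n : ℕ} {p : G}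
    (hf : ContDiffAt 𝕜 n f (g p)) :
    ‖iteratedFDeriv 𝕜 n (f ∘ g) p‖ ≤ ‖g‖ ^ n * ‖iteratedFDeriv 𝕜 n f (g p)‖ :=
  calc ‖iteratedFDeriv 𝕜 n (f ∘ g) p‖
      = ‖(iteratedFDeriv 𝕜 n f (g p)).compContinuousLinearMap fun _ => g‖ := by
        rw [iteratedFDeriv_comp_right_of_contDiffAt g hf]
    _ ≤ ‖iteratedFDeriv 𝕜 n f (g p)‖ * ∏ _i : Fin n, ‖g‖ :=
        ContinuousMultilinearMap.norm_compContinuousLinearMap_le _ _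
    _ = ‖g‖ ^ n * ‖iteratedFDeriv 𝕜 n f (g p)‖ := by
        rw [Fin.prod_const, mul_comm]

theorem norm_iteratedFDeriv_comp_fst_add_snd_le {f : E → F} {n : ℕ} {p : E × E}
    (hf : ContDiffAt 𝕜 n f (p.1 + p.2)) :
    ‖iteratedFDeriv 𝕜 n (fun q : E × E => f (q.1 + q.2)) p‖ ≤
      2 ^ n * ‖iteratedFDeriv 𝕜 n f (p.1 + p.2)‖ :=
  let addL := ContinuousLinearMap.fst 𝕜 E E + ContinuousLinearMap.snd 𝕜 E E
  calc ‖iteratedFDeriv 𝕜 n (f ∘ addL) p‖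
      ≤ ‖addL‖ ^ n * ‖iteratedFDeriv 𝕜 n f (p.1 + p.2)‖ :=
        norm_iteratedFDeriv_comp_right_le addL hf
    _ ≤ 2 ^ n * ‖iteratedFDeriv 𝕜 n f (p.1 + p.2)‖ := by
        gcongr
        exact norm_fst_add_snd_le_two 𝕜 E

theorem stmt11_general {k : WithTop ℕ∞} (x : E → F) (hx : ContDiff 𝕜 k x) :
    ContDiff 𝕜 k (fun p : E × E => x (p.1 + p.2)) ∧
    (∀ y z : E → F, ∀ c : 𝕜,
      (fun p : E × E => (y + z) (p.1 + p.2)) =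
        (fun p : E × E => y (p.1 + p.2)) + (fun p : E × E => z (p.1 + p.2)) ∧
      (fun p : E × E => (c • y) (p.1 + p.2)) = c • (fun p : E × E => y (p.1 + p.2))) ∧
    ∀ n : ℕ, n ≤ k → ∀ p : E × E,
      ‖iteratedFDeriv 𝕜 n (fun p : E × E => x (p.1 + p.2)) p‖ ≤
        2 ^ n * ‖iteratedFDeriv 𝕜 n x (p.1 + p.2)‖ :=
  ⟨hx.comp contDiff_add, fun _ _ _ => ⟨rfl, rfl⟩,
    fun _ hn _ => norm_iteratedFDeriv_comp_fst_add_snd_le (hx.of_le hn).contDiffAt⟩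

end NormedSpace

/-- Example 4 of the paper: the prescription `x ↦ x̄`, `x̄(s,t) = x(s+t)`, defines a
continuous linear map `C^∞(ℝ) → C^∞(ℝ×ℝ)`: `x̄` is smooth, the assignment is linear,
and `‖iteratedFDeriv ℝ n x̄ (s,t)‖ ≤ 2^n |iteratedDeriv n x (s+t)|`. -/
theorem stmt11 (x : ℝ → ℝ) (hx : ContDiff ℝ (⊤ : ℕ∞) x) :
    ContDiff ℝ (⊤ : ℕ∞) (fun p : ℝ × ℝ => x (p.1 + p.2)) ∧
    (∀ y z : ℝ → ℝ, ∀ c : ℝ,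
      (fun p : ℝ × ℝ => (y + z) (p.1 + p.2)) =
        (fun p : ℝ × ℝ => y (p.1 + p.2)) + (fun p : ℝ × ℝ => z (p.1 + p.2)) ∧
      (fun p : ℝ × ℝ => (c • y) (p.1 + p.2)) = c • (fun p : ℝ × ℝ => y (p.1 + p.2))) ∧
    ∀ n : ℕ, ∀ p : ℝ × ℝ,
      ‖iteratedFDeriv ℝ n (fun p : ℝ × ℝ => x (p.1 + p.2)) p‖ ≤
        2 ^ n * |iteratedDeriv n x (p.1 + p.2)| := by
  obtain ⟨smooth, linear, bound⟩ := stmt11_general x hx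
  exact ⟨smooth, linear, fun n p => by
    simpa only [norm_iteratedFDeriv_eq_norm_iteratedDeriv, Real.norm_eq_abs]
      using bound n (mod_cast le_top) p⟩
end

section
/- Let φ : ℝ × ℝ × ℝ → ℝ be infinitely differentiable with φ (t, η + 1, ξ) = φ (t, η, ξ) for all t, η, ξ. Let y, v : ℝ × ℝ → ℝ be continuous with y (t, η + 1) = y (t, η) and v (t, η + 1) = v (t, η) for all t, η. Then for every ε > 0 there exists δ > 0 such that for every real τ with 0 < |τ| < δ and every (t, η) ∈ [0,1] × ℝ, |τ⁻¹·(φ (t, η, y (t,η) + τ·v (t,η)) − φ (t, η, y (t,η))) − (deriv (fun ξ => φ (t, η, ξ)) (y (t,η))) · v (t,η)| < ε. -/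
/-!
Along a fixed `v`, the superposition map is `s ↦ φ (x, y x + s • v x)`, whose derivative in `s` is
jointly continuous in `x` and `s`, hence converges as `s → 0` uniformly for `x` in a compact set. By
the mean value inequality the difference quotients inherit this uniform convergence. Periodicity in
`η` reduces the non-compact cylinder to a compact fundamental domain.
-/

open Filter Function Set Topology

section Slope

variable {𝕜 F : Type*} [RCLike 𝕜] [NormedAddCommGroup F] [NormedSpace 𝕜 F]

theorem norm_slope_sub_le_of_norm_hasDerivWithin_sub_le {f f' : 𝕜 → F} {s : Set 𝕜} {a b : 𝕜}
    {m : F} {C : ℝ} (hs : Convex ℝ s) (hf : ∀ x ∈ s, HasDerivWithinAt f (f' x) s x)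
    (bound : ∀ x ∈ s, ‖f' x - m‖ ≤ C) (ha : a ∈ s) (hb : b ∈ s) (hab : b ≠ a) :
    ‖slope f a b - m‖ ≤ C := by
  have hderiv : ∀ x ∈ s, HasDerivWithinAt (fun x => f x - x • m) (f' x - m) s x := fun x hx => by
    simpa only [one_smul] using! (hf x hx).sub ((hasDerivWithinAt_id x s).smul_const m)
  have hmvt : ‖(f b - b • m) - (f a - a • m)‖ ≤ C * ‖b - a‖ :=
    hs.norm_image_sub_le_of_norm_hasDerivWithin_le hderiv bound ha hb
  have hba : b - a ≠ 0 := sub_ne_zero.2 hab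
  calc ‖slope f a b - m‖ = ‖(b - a)⁻¹ • ((f b - b • m) - (f a - a • m))‖ := by
        rw [sub_sub_sub_comm, ← sub_smul, smul_sub, inv_smul_smul₀ hba, slope_def_module]
    _ = ‖(f b - b • m) - (f a - a • m)‖ / ‖b - a‖ := by
        rw [norm_smul, norm_inv, inv_mul_eq_div]
    _ ≤ C := (div_le_iff₀ (norm_pos_iff.2 hba)).2 hmvt

theorem tendstoUniformlyOn_slope {ι : Type*} {f f' : 𝕜 → ι → F} {a : 𝕜} {K : Set ι}
    (hf : ∀ᶠ s in 𝓝 a, ∀ x ∈ K, HasDerivAt (f · x) (f' s x) s)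
    (hf' : TendstoUniformlyOn f' (f' a) (𝓝 a) K) :
    TendstoUniformlyOn (fun s x => slope (f · x) a s) (f' a) (𝓝[≠] a) K := by
  rw [Metric.tendstoUniformlyOn_iff] at hf' ⊢
  intro ε hε
  obtain ⟨δ, hδ, hball⟩ := Metric.eventually_nhds_iff_ball.1 (hf.and (hf' (ε / 2) (half_pos hε)))
  filter_upwards [nhdsWithin_le_nhds (Metric.ball_mem_nhds a hδ), self_mem_nhdsWithin]
    with s hs hsa x hx
  rw [dist_comm, dist_eq_norm]
  refine lt_of_le_of_lt ?_ (half_lt_self hε)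
  refine norm_slope_sub_le_of_norm_hasDerivWithin_sub_le (convex_ball a δ)
    (fun r hr => ((hball r hr).1 x hx).hasDerivWithinAt) (fun r hr => ?_)
    (Metric.mem_ball_self hδ) hs hsa
  rw [← dist_eq_norm, dist_comm]
  exact ((hball r hr).2 x hx).le

end Slope

section UniformConvergence

theorem tendstoUniformlyOn_of_isCompact_of_continuousOn {ι X α : Type*} [TopologicalSpace ι]
    [TopologicalSpace X] [UniformSpace α] {F : ι → X → α} {K : Set X} (hK : IsCompact K)
    (hF : ContinuousOn (uncurry F) (univ ×ˢ K)) (i : ι) :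
    TendstoUniformlyOn F (F i) (𝓝 i) K := by
  intro u hu
  obtain ⟨V, hV, hVu⟩ := hK.mem_uniformity_of_prod hF (mem_univ i) (symm_le_uniformity hu)
  rw [nhdsWithin_univ] at hV
  exact mem_of_superset hV hVu

theorem tendstoUniformlyOn_prod_univ_of_periodic {ι X α : Type*} [UniformSpace α]
    {F : ι → X × ℝ → α} {f : X × ℝ → α} {l : Filter ι} {K : Set X} {c : ℝ} (hc : 0 < c)
    (hF : ∀ i, ∀ t ∈ K, Periodic (fun η => F i (t, η)) c)
    (hf : ∀ t ∈ K, Periodic (fun η => f (t, η)) c)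
    (h : TendstoUniformlyOn F f l (K ×ˢ Icc 0 c)) :
    TendstoUniformlyOn F f l (K ×ˢ univ) := by
  intro u hu
  filter_upwards [h u hu] with i hi
  rintro ⟨t, η⟩ ⟨ht, -⟩
  have hpair : Periodic (fun η => (f (t, η), F i (t, η))) c := fun η =>
    Prod.ext (hf t ht η) (hF i t ht η)
  obtain ⟨θ, hθ, hηθ⟩ := hpair.exists_mem_Ico₀ hc η
  exact hηθ ▸ hi (t, θ) ⟨ht, Ico_subset_Icc_self hθ⟩

theorem tendstoUniformlyOn_nhdsNE_iff_dist {ι X α : Type*} [PseudoMetricSpace ι]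
    [PseudoMetricSpace α] {F : ι → X → α} {f : X → α} {a : ι} {K : Set X} :
    TendstoUniformlyOn F f (𝓝[≠] a) K ↔
      ∀ ε > 0, ∃ δ > 0, ∀ i, i ≠ a → dist i a < δ → ∀ x ∈ K, dist (F i x) (f x) < ε := by
  simp only [Metric.tendstoUniformlyOn_iff, eventually_nhdsWithin_iff, Metric.eventually_nhds_iff,
    mem_compl_singleton_iff, dist_comm (f _)]
  grind

end UniformConvergence

section PartialDerivative

variable {𝕜 P E F : Type*} [NontriviallyNormedField 𝕜] [NormedAddCommGroup P] [NormedSpace 𝕜 P]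
  [NormedAddCommGroup E] [NormedSpace 𝕜 E] [NormedAddCommGroup F] [NormedSpace 𝕜 F]
  {g : P → E → F}

theorem hasFDerivAt_fderiv_of_contDiff_uncurry (hg : ContDiff 𝕜 1 (uncurry g)) (p : P) (ξ : E) :
    HasFDerivAt (g p) (fderiv 𝕜 (g p) ξ) ξ :=
  ((hg.comp (contDiff_prodMk_right p)).differentiable one_ne_zero ξ).hasFDerivAt

theorem continuous_uncurry_fderiv_of_contDiff_uncurry (hg : ContDiff 𝕜 1 (uncurry g)) :
    Continuous (uncurry fun p ξ => fderiv 𝕜 (g p) ξ) :=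
  Continuous.fderiv (f := fun q : P × E => g q.1)
    (hg.comp ((contDiff_fst.comp contDiff_fst).prodMk contDiff_snd)) continuous_snd le_rfl

end PartialDerivative

section Superposition

variable {𝕜 X E F : Type*} [RCLike 𝕜] [TopologicalSpace X] [NormedAddCommGroup E]
  [NormedSpace 𝕜 E] [NormedAddCommGroup F] [NormedSpace 𝕜 F]

theorem tendstoUniformlyOn_slope_zero_superposition {K : Set X} (hK : IsCompact K) {φ : X → E → F}
    {φ' : X → E → E →L[𝕜] F} (hφ : ∀ x ∈ K, ∀ ξ, HasFDerivAt (φ x) (φ' x ξ) ξ)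
    (hφ' : ContinuousOn (uncurry φ') (K ×ˢ univ)) {y v : X → E} (hy : ContinuousOn y K)
    (hv : ContinuousOn v K) :
    TendstoUniformlyOn (fun (τ : 𝕜) x => τ⁻¹ • (φ x (y x + τ • v x) - φ x (y x)))
      (fun x => φ' x (y x) (v x)) (𝓝[≠] 0) K := by
  have hderiv : ∀ s : 𝕜, ∀ x ∈ K,
      HasDerivAt (fun s : 𝕜 => φ x (y x + s • v x)) (φ' x (y x + s • v x) (v x)) s := by
    intro s x hx
    have hline : HasDerivAt (fun s : 𝕜 => y x + s • v x) (v x) s := by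
      simpa only [one_smul] using! ((hasDerivAt_id s).smul_const (v x)).const_add (y x)
    exact (hφ x hx _).comp_hasDerivAt s hline
  have hcont : ContinuousOn (uncurry fun (s : 𝕜) x => φ' x (y x + s • v x) (v x))
      (univ ×ˢ K) := by
    have hsnd : MapsTo Prod.snd (univ ×ˢ K : Set (𝕜 × X)) K := fun _ hp => hp.2
    have hy' := hy.comp continuousOn_snd hsnd
    have hv' := hv.comp continuousOn_snd hsnd
    have hpoint := continuousOn_snd.prodMk (hy'.add (continuousOn_fst.smul hv'))
    exact (hφ'.comp hpoint fun _ hp => ⟨hp.2, mem_univ _⟩).clm_apply hv'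
  simpa only [slope_def_module, sub_zero, zero_smul, add_zero] using
    tendstoUniformlyOn_slope (.of_forall hderiv)
      (tendstoUniformlyOn_of_isCompact_of_continuousOn hK hcont 0)

theorem stmt12_general {K : Set X} (hK : IsCompact K) {c : ℝ} (hc : 0 < c) {φ : X × ℝ → E → F}
    {φ' : X × ℝ → E → E →L[𝕜] F} (hφ : ∀ p ∈ K ×ˢ univ, ∀ ξ, HasFDerivAt (φ p) (φ' p ξ) ξ)
    (hφ' : ContinuousOn (uncurry φ') ((K ×ˢ univ) ×ˢ univ)) {y v : X × ℝ → E}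
    (hy : ContinuousOn y (K ×ˢ univ)) (hv : ContinuousOn v (K ×ˢ univ))
    (hφper : ∀ t ∈ K, Periodic (fun η => φ (t, η)) c)
    (hyper : ∀ t ∈ K, Periodic (fun η => y (t, η)) c)
    (hvper : ∀ t ∈ K, Periodic (fun η => v (t, η)) c) :
    TendstoUniformlyOn (fun (τ : 𝕜) p => τ⁻¹ • (φ p (y p + τ • v p) - φ p (y p)))
      (fun p => φ' p (y p) (v p)) (𝓝[≠] 0) (K ×ˢ univ) := by
  have hsub : K ×ˢ Icc 0 c ⊆ K ×ˢ univ := prod_mono_right (subset_univ _)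
  have hφ'per : ∀ t ∈ K, Periodic (fun η => φ' (t, η)) c := fun t ht η => funext fun ξ => by
    have hshift : HasFDerivAt (φ (t, η)) (φ' (t, η + c) ξ) ξ :=
      (show φ (t, η + c) = φ (t, η) from hφper t ht η) ▸ hφ (t, η + c) ⟨ht, mem_univ _⟩ ξ
    exact hshift.unique (hφ (t, η) ⟨ht, mem_univ _⟩ ξ)
  refine tendstoUniformlyOn_prod_univ_of_periodic hc (fun τ t ht η => ?_) (fun t ht η => ?_)
    (tendstoUniformlyOn_slope_zero_superposition (hK.prod isCompact_Icc)
      (fun p hp => hφ p (hsub hp))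
      (hφ'.mono (prod_mono_left hsub)) (hy.mono hsub) (hv.mono hsub))
  · simp only [hφper t ht η, hyper t ht η, hvper t ht η]
  · simp only [hφ'per t ht η, hyper t ht η, hvper t ht η]

end Superposition

/-- Uniform linearization step from Remarks 5(b): for smooth `φ` that is 1-periodic in
its second variable and continuous 1-periodic `y, v` on the cylinder `Q = [0,1] × ℝ`,
the difference quotients of `ξ ↦ φ(t,η,ξ)` along `y + τ v` converge to
`∂₃φ(t,η,y(t,η)) · v(t,η)` uniformly in `(t,η) ∈ [0,1] × ℝ`. -/
theorem stmt12 (φ : ℝ × ℝ × ℝ → ℝ) (hφ : ContDiff ℝ (⊤ : ℕ∞) φ)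
    (hφper : ∀ t η ξ : ℝ, φ (t, η + 1, ξ) = φ (t, η, ξ))
    (y v : ℝ × ℝ → ℝ) (hy : Continuous y) (hv : Continuous v)
    (hyper : ∀ t η : ℝ, y (t, η + 1) = y (t, η))
    (hvper : ∀ t η : ℝ, v (t, η + 1) = v (t, η)) :
    ∀ ε : ℝ, 0 < ε → ∃ δ : ℝ, 0 < δ ∧
      ∀ τ : ℝ, 0 < |τ| → |τ| < δ → ∀ t η : ℝ, t ∈ Set.Icc (0 : ℝ) 1 →
        |τ⁻¹ * (φ (t, η, y (t, η) + τ * v (t, η)) - φ (t, η, y (t, η))) -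
            deriv (fun ξ : ℝ => φ (t, η, ξ)) (y (t, η)) * v (t, η)| < ε := by
  have hg : ContDiff ℝ 1 (uncurry fun (p : ℝ × ℝ) ξ => φ (p.1, p.2, ξ)) :=
    (hφ.of_le (by simp)).comp (by fun_prop)
  simpa [tendstoUniformlyOn_nhdsNE_iff_dist, Real.dist_eq, fderiv_eq_smul_deriv, mul_comm] using
    stmt12_general (𝕜 := ℝ) (K := Icc (0 : ℝ) 1) isCompact_Icc one_pos
      (fun p _ => hasFDerivAt_fderiv_of_contDiff_uncurry hg p)
      (continuous_uncurry_fderiv_of_contDiff_uncurry hg).continuousOn hy.continuousOn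
      hv.continuousOn (fun t _ η => funext (hφper t η)) (fun t _ => hyper t) (fun t _ => hvper t)
end

section
/- Let x : ℝ → ℝ be continuously differentiable and let v : ℝ × ℝ → ℝ be continuously differentiable. Define y : ℝ × ℝ → ℝ by y (t, η) = x (η − t) + ∫_{τ ∈ [0, t]} v (τ, η − t + τ) dτ. Then y is differentiable, y (0, η) = x η for all η, and for all (t, η) ∈ ℝ × ℝ the partial derivatives satisfy ∂₁ y (t, η) + ∂₂ y (t, η) = v (t, η), where ∂₁ and ∂₂ denote the partial derivatives in the first and second variable respectively. -/
/-!
Put `f τ ξ = v (τ, ξ + τ • c)`. In the coordinates `(t, ξ)` with `ξ = η - t • c`, the solution reads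
`x ξ + ∫ τ in 0..t, f τ ξ`. The partial derivatives of the integral are `f t ξ` and the integral of
the `ξ`-derivative of `f`; both are jointly continuous, so the integral is differentiable.
By the chain rule, `∂₁ y + ∂₂ y c` is the derivative of `y` along the characteristic direction
`(1, c)`. The coordinate `ξ` is constant along a characteristic, so `x ξ` contributes nothing and
the integral contributes `v`, by the fundamental theorem of calculus.
-/

open MeasureTheory Set
open scoped Topology

theorem exists_eventually_forall_mem_norm_le_of_isCompact {X Y E : Type*}
    [TopologicalSpace X] [TopologicalSpace Y] [SeminormedAddCommGroup E] {K : Set Y}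
    (hK : IsCompact K) {g : Y → X → E} (hg : Continuous ↿g) (x₀ : X) :
    ∃ C, ∀ᶠ x in 𝓝 x₀, ∀ y ∈ K, ‖g y x‖ ≤ C := by
  have hg₀ : Continuous (g · x₀) := hg.comp (.prodMk_left x₀)
  obtain ⟨C, hC⟩ := hK.exists_bound_of_continuousOn hg₀.continuousOn
  refine ⟨C + 1, hK.eventually_forall_of_forall_eventually fun y hy => ?_⟩
  have hlt : ‖g y x₀‖ < C + 1 := (hC y hy).trans_lt (lt_add_one C)
  have hcont : Continuous fun z : X × Y => ‖g z.2 z.1‖ := (hg.comp continuous_swap).norm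
  exact ((hcont.tendsto (x₀, y)).eventually_lt_const hlt).mono fun _ => le_of_lt

section ParametricIntegral

variable {H E : Type*} [NormedAddCommGroup H] [NormedAddCommGroup E] [NormedSpace ℝ E]

theorem hasFDerivAt_intervalIntegral_of_continuous {𝕜 : Type*} [RCLike 𝕜] [NormedSpace 𝕜 H]
    [NormedSpace 𝕜 E] {μ : Measure ℝ} [IsLocallyFiniteMeasure μ] {f : ℝ → H → E}
    {f' : ℝ → H → H →L[𝕜] E} (hf : ∀ ξ, Continuous (f · ξ)) (hf' : Continuous ↿f')
    (hff' : ∀ τ ξ, HasFDerivAt (f τ) (f' τ ξ) ξ) (a b : ℝ) (ξ : H) :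
    HasFDerivAt (fun ξ => ∫ τ in a..b, f τ ξ ∂μ) (∫ τ in a..b, f' τ ξ ∂μ) ξ := by
  obtain ⟨C, hC⟩ :=
    exists_eventually_forall_mem_norm_le_of_isCompact (isCompact_uIcc (a := a) (b := b)) hf' ξ
  have hf'ξ : Continuous (f' · ξ) := hf'.comp (.prodMk_left ξ)
  exact intervalIntegral.hasFDerivAt_integral_of_dominated_of_fderiv_le
    (F := fun ξ τ => f τ ξ) (F' := fun ξ τ => f' τ ξ) (bound := fun _ => C) hC
    (.of_forall fun ξ => (hf ξ).aestronglyMeasurable) ((hf ξ).intervalIntegrable a b)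
    hf'ξ.aestronglyMeasurable
    (.of_forall fun τ hτ _ hζ => hζ τ (uIoc_subset_uIcc hτ)) intervalIntegrable_const
    (.of_forall fun τ _ ζ _ => hff' τ ζ)

theorem hasStrictFDerivAt_parametric_primitive_of_continuous [NormedSpace ℝ H] [CompleteSpace E]
    {f : ℝ → H → E} {f' : ℝ → H → H →L[ℝ] E} (hf : Continuous ↿f) (hf' : Continuous ↿f')
    (hff' : ∀ τ ξ, HasFDerivAt (f τ) (f' τ ξ) ξ) (a : ℝ) (p : ℝ × H) :
    HasStrictFDerivAt (fun p : ℝ × H => ∫ τ in a..p.1, f τ p.2)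
      ((ContinuousLinearMap.toSpanSingleton ℝ (f p.1 p.2)).coprod (∫ τ in a..p.1, f' τ p.2)) p := by
  have hfξ (ξ : H) : Continuous (f · ξ) := hf.comp (.prodMk_left ξ)
  have hcont₁ : Continuous fun q : ℝ × H => ContinuousLinearMap.toSpanSingleton ℝ (f q.1 q.2) :=
    (ContinuousLinearMap.toSpanSingletonCLE (𝕜 := ℝ)).continuous.comp hf
  have hcont₂ : Continuous fun q : ℝ × H => ∫ τ in a..q.1, f' τ q.2 :=
    intervalIntegral.continuous_parametric_intervalIntegral_of_continuous
      (f := fun (q : ℝ × H) τ => f' τ q.2)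
      (hf'.comp (continuous_snd.prodMk (continuous_snd.comp continuous_fst))) continuous_fst
  exact hasStrictFDerivAt_uncurry_coprod (f := fun t ξ => ∫ τ in a..t, f τ ξ)
    (f₁ := fun t ξ => ContinuousLinearMap.toSpanSingleton ℝ (f t ξ))
    (f₂ := fun t ξ => ∫ τ in a..t, f' τ ξ)
    (.of_forall fun q => ((hfξ q.2).integral_hasStrictDerivAt a q.1).hasDerivAt.hasFDerivAt)
    (.of_forall fun q => hasFDerivAt_intervalIntegral_of_continuous hfξ hf' hff' a q.1 q.2)
    hcont₁.continuousAt hcont₂.continuousAt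

end ParametricIntegral

section PartialDerivatives

variable {𝕜 G H E : Type*} [NontriviallyNormedField 𝕜] [NormedAddCommGroup G] [NormedSpace 𝕜 G]
  [NormedAddCommGroup H] [NormedSpace 𝕜 H] [NormedAddCommGroup E] [NormedSpace 𝕜 E]

theorem hasFDerivAt_partial_fst {f : G × H → E} {a : G} {b : H}
    (hf : DifferentiableAt 𝕜 f (a, b)) :
    HasFDerivAt (fun s => f (s, b)) ((fderiv 𝕜 f (a, b)).comp (.inl 𝕜 G H)) a :=
  hf.hasFDerivAt.comp a (hasFDerivAt_prodMk_left a b)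

theorem hasFDerivAt_partial_snd {f : G × H → E} {a : G} {b : H}
    (hf : DifferentiableAt 𝕜 f (a, b)) :
    HasFDerivAt (fun ξ => f (a, ξ)) ((fderiv 𝕜 f (a, b)).comp (.inr 𝕜 G H)) b :=
  hf.hasFDerivAt.comp b (hasFDerivAt_prodMk_right a b)

theorem lineDeriv_prodMk_one_eq_deriv_add_fderiv {f : 𝕜 × H → E} {t : 𝕜} {η : H}
    (hf : DifferentiableAt 𝕜 f (t, η)) (c : H) :
    lineDeriv 𝕜 f (t, η) (1, c) =
      deriv (fun s => f (s, η)) t + fderiv 𝕜 (fun ξ => f (t, ξ)) η c := by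
  rw [hf.lineDeriv_eq_fderiv, (hasFDerivAt_partial_fst hf).hasDerivAt.deriv,
    (hasFDerivAt_partial_snd hf).fderiv]
  simp [← map_add]

end PartialDerivatives

section Transport

variable {H E : Type*} [NormedAddCommGroup H] [NormedSpace ℝ H]

/-- The operator `S`, for velocity `c`: the solution of the homogeneous transport equation with
initial datum `x`, as a function of the pair (time, position). -/
def freeTransport (c : H) (x : H → E) (p : ℝ × H) : E :=
  x (p.2 - p.1 • c)

variable [NormedAddCommGroup E] [NormedSpace ℝ E]

/-- The operator `I`, for velocity `c`: the solution of the transport equation with source `v` and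
zero initial datum, obtained by integrating `v` along characteristics. -/
noncomputable def duhamel (c : H) (v : ℝ × H → E) (p : ℝ × H) : E :=
  ∫ τ in (0 : ℝ)..p.1, v (τ, p.2 - p.1 • c + τ • c)

theorem differentiable_freeTransport (c : H) {x : H → E} (hx : Differentiable ℝ x) :
    Differentiable ℝ (freeTransport c x) :=
  hx.comp (by fun_prop)

theorem hasLineDerivAt_freeTransport (c : H) (x : H → E) (p : ℝ × H) :
    HasLineDerivAt ℝ (freeTransport c x) 0 p (1, c) := by
  have hconst (s : ℝ) : freeTransport c x (p + s • (1, c)) = freeTransport c x p := by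
    simp [freeTransport, add_smul]
  simpa only [HasLineDerivAt, hconst] using hasDerivAt_const 0 (freeTransport c x p)

variable [CompleteSpace E]

theorem differentiable_duhamel (c : H) {v : ℝ × H → E} {v' : ℝ × H → H →L[ℝ] E}
    (hv : Continuous v) (hv' : Continuous v')
    (hvv' : ∀ t η, HasFDerivAt (fun ξ => v (t, ξ)) (v' (t, η)) η) :
    Differentiable ℝ (duhamel c v) := by
  have hshear : Continuous fun q : ℝ × H => (q.1, q.2 + q.1 • c) := by fun_prop
  have hprim : Differentiable ℝ fun q : ℝ × H => ∫ τ in (0 : ℝ)..q.1, v (τ, q.2 + τ • c) :=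
    fun q => (hasStrictFDerivAt_parametric_primitive_of_continuous
      (f := fun τ ξ => v (τ, ξ + τ • c)) (f' := fun τ ξ => v' (τ, ξ + τ • c))
      (hv.comp hshear) (hv'.comp hshear)
      (fun τ ξ => (hasFDerivAt_comp_add_right (τ • c)).2 (hvv' τ (ξ + τ • c))) 0 q).differentiableAt
  have hchar : Differentiable ℝ fun p : ℝ × H => (p.1, p.2 - p.1 • c) := by fun_prop
  exact hprim.comp hchar

theorem hasLineDerivAt_duhamel (c : H) {v : ℝ × H → E} (hv : Continuous v) (p : ℝ × H) :
    HasLineDerivAt ℝ (duhamel c v) (v p) p (1, c) := by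
  let w : ℝ → E := fun τ => v (τ, p.2 - p.1 • c + τ • c)
  have hw : Continuous w := hv.comp (by fun_prop)
  have hwp : w p.1 = v p := by simp [w]
  have hline (s : ℝ) : duhamel c v (p + s • (1, c)) = ∫ τ in (0 : ℝ)..p.1 + s, w τ := by
    simp [duhamel, w, add_smul]
  have hFTC : HasDerivAt (fun t => ∫ τ in (0 : ℝ)..t, w τ) (v p) (p.1 + 0) := by
    simpa only [add_zero, hwp] using (hw.integral_hasStrictDerivAt 0 p.1).hasDerivAt
  simpa only [HasLineDerivAt, hline] using hFTC.comp_const_add p.1 0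

theorem stmt13_general (c : H) {x : H → E} (hx : Differentiable ℝ x)
    {v : ℝ × H → E} {v' : ℝ × H → H →L[ℝ] E} (hv : Continuous v) (hv' : Continuous v')
    (hvv' : ∀ t η, HasFDerivAt (fun ξ => v (t, ξ)) (v' (t, η)) η) {y : ℝ × H → E}
    (hy : ∀ t η, y (t, η) =
      x (η - t • c) + ∫ τ in (0 : ℝ)..t, v (τ, η - t • c + τ • c)) :
    Differentiable ℝ y ∧ (∀ η, y (0, η) = x η) ∧
      ∀ t η, deriv (fun s => y (s, η)) t + fderiv ℝ (fun ξ => y (t, ξ)) η c = v (t, η) := by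
  obtain rfl : y = freeTransport c x + duhamel c v := funext fun p => hy p.1 p.2
  have hdiff : Differentiable ℝ (freeTransport c x + duhamel c v) :=
    (differentiable_freeTransport c hx).add (differentiable_duhamel c hv hv' hvv')
  refine ⟨hdiff, fun η => by simp [freeTransport, duhamel], fun t η => ?_⟩
  have hline : HasLineDerivAt ℝ (freeTransport c x + duhamel c v) (0 + v (t, η)) (t, η) (1, c) :=
    HasDerivAt.add (hasLineDerivAt_freeTransport c x (t, η)) (hasLineDerivAt_duhamel c hv (t, η))
  rw [← lineDeriv_prodMk_one_eq_deriv_add_fderiv (hdiff (t, η)) c, hline.lineDeriv, zero_add]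

end Transport

/-- Example 2 of the paper (the operators `S` and `I`): for `C¹` data `x` and `v`,
`y(t,η) = x(η−t) + ∫₀ᵗ v(τ, η−t+τ) dτ` is differentiable, satisfies `y(0,·) = x`,
and solves the transport equation `∂₁y + ∂₂y = v`. -/
theorem stmt13 (x : ℝ → ℝ) (hx : ContDiff ℝ 1 x)
    (v : ℝ × ℝ → ℝ) (hv : ContDiff ℝ 1 v)
    (y : ℝ × ℝ → ℝ)
    (hy : ∀ t η : ℝ, y (t, η) = x (η - t) + ∫ τ in (0 : ℝ)..t, v (τ, η - t + τ)) :
    Differentiable ℝ y ∧ (∀ η : ℝ, y (0, η) = x η) ∧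
      ∀ t η : ℝ,
        deriv (fun s : ℝ => y (s, η)) t + deriv (fun s : ℝ => y (t, s)) η = v (t, η) := by
  simpa using stmt13_general 1 (hx.differentiable one_ne_zero) hv.continuous
    ((hv.continuous_fderiv one_ne_zero).clm_comp_const (.inr ℝ ℝ ℝ))
    (fun t η => hasFDerivAt_partial_snd (hv.differentiable one_ne_zero (t, η))) (by simpa using hy)
end
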